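/- arXiv:1810.07126 — 6 statements merged into one kernel-verified Lean document; each statement's English description precedes it below -/
import Mathlib

section
/- Let g1, g2 : [0,1] → ℝ be continuous functions and define κ_{g1,g2}(X1,X2) = ρ(g1(F1(X1)), g2(F2(X2))) for random variables X1 ~ F1, X2 ~ F2 with continuous distribution functions, where ρ denotes Pearson's correlation coefficient. If κ_{g1,g2} is a measure of concordance in the sense of Scarsini, then g1 and g2 are both increasing or both decreasing, i.e., (g1(u') − g1(u))(g2(v') − g2(v)) ≥ 0 for all 0 ≤ u < u' ≤ 1 and 0 ≤ v < v' ≤ 1. -/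
open MeasureTheory ProbabilityTheory Set

noncomputable section

/-- The uniform distribution on (0,1). -/
def unif01 : Measure ℝ := volume.restrict (Set.Ioo (0:ℝ) 1)

/-- Pearson's correlation coefficient of two real random variables. -/
def pearson {Ω : Type*} [MeasurableSpace Ω] (μ : Measure Ω) (Y1 Y2 : Ω → ℝ) : ℝ :=
  ((∫ ω, Y1 ω * Y2 ω ∂μ) - (∫ ω, Y1 ω ∂μ) * (∫ ω, Y2 ω ∂μ)) /
    Real.sqrt (variance Y1 μ * variance Y2 μ)

/-- The distribution function (CDF) of a measure on ℝ. -/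
def cdfOf (ν : Measure ℝ) : ℝ → ℝ := fun x => (ν (Set.Iic x)).toReal

/-- The quantile function (generalized inverse) of a distribution function. -/
def quantileFn (G : ℝ → ℝ) (p : ℝ) : ℝ := sInf {x : ℝ | p ≤ G x}

/-- The joint distribution function of a measure on ℝ². -/
def cdf2 (μ : Measure (ℝ × ℝ)) (u v : ℝ) : ℝ := (μ (Set.Iic u ×ˢ Set.Iic v)).toReal

/-- A (bivariate) copula: the joint law of a random vector with uniform (0,1) margins. -/
structure IsCopula (μ : Measure (ℝ × ℝ)) : Prop where
  prob : IsProbabilityMeasure μ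
  fst_marginal : μ.map Prod.fst = unif01
  snd_marginal : μ.map Prod.snd = unif01

/-- The comonotone copula M. -/
def comonCopula : Measure (ℝ × ℝ) := unif01.map (fun u => (u, u))

/-- The countermonotone copula W. -/
def counterCopula : Measure (ℝ × ℝ) := unif01.map (fun u => (u, 1 - u))

/-- The independence copula Π. -/
def indepCopula : Measure (ℝ × ℝ) := unif01.prod unif01

/-- A measure of concordance in the sense of Scarsini, as a functional on copulas. -/
structure IsConcordanceMeasure (κ : Measure (ℝ × ℝ) → ℝ) : Prop where
  symmetry : ∀ μ, IsCopula μ → κ (μ.map Prod.swap) = κ μ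
  coherence : ∀ μ ν, IsCopula μ → IsCopula ν →
    (∀ u v, cdf2 μ u v ≤ cdf2 ν u v) → κ μ ≤ κ ν
  range : ∀ μ, IsCopula μ → κ μ ∈ Set.Icc (-1 : ℝ) 1
  comonotone_val : κ comonCopula = 1
  countermonotone_val : κ counterCopula = -1
  independence : κ indepCopula = 0
  change_sign : ∀ μ, IsCopula μ → κ (μ.map (fun p => (p.1, 1 - p.2))) = - κ μ
  continuity : ∀ (Cs : ℕ → Measure (ℝ × ℝ)) (C : Measure (ℝ × ℝ)),
    (∀ n, IsCopula (Cs n)) → IsCopula C →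
    (∀ u v, Filter.Tendsto (fun n => cdf2 (Cs n) u v) Filter.atTop (nhds (cdf2 C u v))) →
    Filter.Tendsto (fun n => κ (Cs n)) Filter.atTop (nhds (κ C))

instance unif01_prob : IsProbabilityMeasure unif01 := ⟨by simp [unif01]⟩

lemma unif01_intervals (x y : ℝ) (hx : 0 ≤ x) (hxy : x ≤ y) (hy : y ≤ 1) :
    unif01.real (Ioo x y) = y - x := by
  rw [unif01, measureReal_restrict_apply measurableSet_Ioo,
    inter_eq_left.2 (Ioo_subset_Ioo hx hy)]
  simp [measureReal_def, hxy]

lemma integrable_unif01 (g : ℝ → ℝ) (h : ContinuousOn g (Icc 0 1)) : Integrable g unif01 :=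
  (h.integrableOn_Icc).mono_set Ioo_subset_Icc_self

lemma exists_pert (g : ℝ → ℝ) (h : ContinuousOn g (Icc 0 1)) (u u' : ℝ) (h0 : 0 ≤ u)
    (huu : u < u') (h1 : u' ≤ 1) (hg : g u < g u') :
    ∃ a : ℝ → ℝ, Measurable a ∧ (∀ x, |a x| ≤ 1) ∧ ∫ x, a x ∂unif01 = 0 ∧
      (∀ x, 0 ≤ ∫ t in Iic x, a t ∂unif01) ∧ ∫ x, a x * g x ∂unif01 < 0 := by
  have hgi := integrable_unif01 g h
  obtain ⟨d1, hd1, H1⟩ := Metric.continuousWithinAt_iff.1 (h u ⟨h0, by linarith⟩)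
    ((g u' - g u) / 3) (by linarith)
  obtain ⟨d2, hd2, H2⟩ := Metric.continuousWithinAt_iff.1 (h u' ⟨by linarith, h1⟩)
    ((g u' - g u) / 3) (by linarith)
  obtain ⟨e, he, he1, he2, he3⟩ : ∃ e : ℝ, 0 < e ∧ e ≤ d1 ∧ e ≤ d2 ∧ e ≤ (u' - u) / 2 :=
    ⟨min d1 (min d2 ((u' - u) / 2)), by
      refine lt_min hd1 (lt_min hd2 (by linarith)), by simp, by simp, by simp⟩
  have mA : MeasurableSet (Ioo u (u + e)) := measurableSet_Ioo
  have mB : MeasurableSet (Ioo (u' - e) u') := measurableSet_Ioo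
  have vA : unif01.real (Ioo u (u + e)) = e := by
    rw [unif01_intervals _ _ h0 (by linarith) (by linarith)]; ring
  have vB : unif01.real (Ioo (u' - e) u') = e := by
    rw [unif01_intervals _ _ (by linarith) (by linarith) h1]; ring
  have iA : Integrable ((Ioo u (u + e)).indicator (fun _ => (1:ℝ))) unif01 :=
    (integrable_const _).indicator mA
  have iB : Integrable ((Ioo (u' - e) u').indicator (fun _ => (1:ℝ))) unif01 :=
    (integrable_const _).indicator mB
  refine ⟨fun x => (Ioo u (u + e)).indicator (fun _ => (1:ℝ)) x -
    (Ioo (u' - e) u').indicator (fun _ => (1:ℝ)) x, ?_, ?_, ?_, ?_, ?_⟩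
  · exact (measurable_const.indicator mA).sub (measurable_const.indicator mB)
  · intro x
    simp only [indicator_apply]
    split_ifs <;> norm_num
  · rw [integral_sub iA iB, integral_indicator mA, integral_indicator mB]
    simp [vA, vB]
  · intro x
    rw [integral_sub iA.integrableOn iB.integrableOn, setIntegral_indicator mA,
      setIntegral_indicator mB]
    simp only [integral_const, smul_eq_mul, mul_one, measureReal_restrict_apply_univ]
    rcases le_total x (u' - e) with hx | hx
    · have : Iic x ∩ Ioo (u' - e) u' = ∅ := by
        ext t; simp only [mem_inter_iff, mem_Iic, mem_Ioo, mem_empty_iff_false, iff_false]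
        intro ht; linarith [ht.1, ht.2.1]
      rw [this]; simp
    · have : Iic x ∩ Ioo u (u + e) = Ioo u (u + e) := by
        refine inter_eq_right.2 fun t ht => ?_
        simp only [mem_Iic]; linarith [ht.2]
      rw [this, vA, sub_nonneg]
      exact (measureReal_mono inter_subset_right).trans vB.le
  · have e1 : (fun x => ((Ioo u (u + e)).indicator (fun _ => (1:ℝ)) x -
        (Ioo (u' - e) u').indicator (fun _ => (1:ℝ)) x) * g x) =
        fun x => (Ioo u (u + e)).indicator g x - (Ioo (u' - e) u').indicator g x := by
      ext x; simp only [indicator_apply]; split_ifs <;> ring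
    rw [e1, integral_sub (hgi.indicator mA) (hgi.indicator mB), integral_indicator mA,
      integral_indicator mB]
    have b1 : ∫ x in Ioo u (u + e), g x ∂unif01 ≤
        ∫ x in Ioo u (u + e), (g u + (g u' - g u) / 3) ∂unif01 := by
      refine setIntegral_mono_on hgi.integrableOn (integrable_const _) mA fun x hx => ?_
      have := H1 (x := x) ⟨by linarith [hx.1], by linarith [hx.2]⟩
        (by rw [Real.dist_eq, abs_lt]; constructor <;> linarith [hx.1, hx.2])
      rw [Real.dist_eq, abs_lt] at this
      linarith [this.2]
    have b2 : ∫ x in Ioo (u' - e) u', (g u' - (g u' - g u) / 3) ∂unif01 ≤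
        ∫ x in Ioo (u' - e) u', g x ∂unif01 := by
      refine setIntegral_mono_on (integrable_const _) hgi.integrableOn mB fun x hx => ?_
      have := H2 (x := x) ⟨by linarith [hx.1], by linarith [hx.2]⟩
        (by rw [Real.dist_eq, abs_lt]; constructor <;> linarith [hx.1, hx.2])
      rw [Real.dist_eq, abs_lt] at this
      linarith [this.1]
    rw [setIntegral_const, vA, smul_eq_mul] at b1
    rw [setIntegral_const, vB, smul_eq_mul] at b2
    nlinarith

/-- The perturbed independence copula. -/
def pertC (a b : ℝ → ℝ) : Measure (ℝ × ℝ) :=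
  (unif01.prod unif01).withDensity (fun p => ENNReal.ofReal (1 + a p.1 * b p.2))

lemma pert_nonneg {a b : ℝ → ℝ} (ha : ∀ x, |a x| ≤ 1) (hb : ∀ x, |b x| ≤ 1) (x y : ℝ) :
    0 ≤ 1 + a x * b y := by
  have : |a x * b y| ≤ 1 := by
    rw [abs_mul]; exact mul_le_one₀ (ha x) (abs_nonneg _) (hb y)
  linarith [(abs_le.1 this).1]

lemma integrable_bdd {a : ℝ → ℝ} (ma : Measurable a) (ha : ∀ x, |a x| ≤ 1) :
    Integrable a unif01 :=
  Integrable.of_bound ma.aestronglyMeasurable 1 (by simpa using Filter.Eventually.of_forall ha)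

lemma lint_one {b : ℝ → ℝ} (mb : Measurable b) (hb : ∀ x, |b x| ≤ 1)
    (ib : ∫ x, b x ∂unif01 = 0) (c : ℝ) (hc : ∀ y, 0 ≤ 1 + c * b y) :
    ∫⁻ y, ENNReal.ofReal (1 + c * b y) ∂unif01 = 1 := by
  have hi : Integrable (fun y => c * b y) unif01 := (integrable_bdd mb hb).const_mul c
  have hi' : Integrable (fun y => 1 + c * b y) unif01 := (integrable_const _).add hi
  rw [← ofReal_integral_eq_lintegral_ofReal hi'
    (Filter.Eventually.of_forall hc), integral_add (integrable_const _) hi, integral_const_mul, ib]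
  simp

lemma pert_meas {a b : ℝ → ℝ} (ma : Measurable a) (mb : Measurable b) :
    Measurable (fun p : ℝ × ℝ => ENNReal.ofReal (1 + a p.1 * b p.2)) := by
  fun_prop

lemma pert_copula {a b : ℝ → ℝ} (ma : Measurable a) (mb : Measurable b)
    (ha : ∀ x, |a x| ≤ 1) (hb : ∀ x, |b x| ≤ 1)
    (ia : ∫ x, a x ∂unif01 = 0) (ib : ∫ x, b x ∂unif01 = 0) : IsCopula (pertC a b) := by
  have hm := pert_meas ma mb
  have f : (pertC a b).map Prod.fst = unif01 := by
    ext s hs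
    rw [Measure.map_apply measurable_fst hs, pertC, withDensity_apply _ (measurable_fst hs),
      ← prod_univ, ← Measure.prod_restrict, lintegral_prod _ hm.aemeasurable, Measure.restrict_univ]
    simp only [fun x => lint_one mb hb ib (a x) (fun y => pert_nonneg ha hb x y)]
    simp
  have g : (pertC a b).map Prod.snd = unif01 := by
    ext s hs
    rw [Measure.map_apply measurable_snd hs, pertC, withDensity_apply _ (measurable_snd hs),
      ← univ_prod, ← Measure.prod_restrict, lintegral_prod_symm _ hm.aemeasurable,
      Measure.restrict_univ]
    simp only [fun y => (by
      simp_rw [mul_comm _ (b y)]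
      exact lint_one ma ha ia (b y) (fun x => by
        rw [mul_comm]; exact pert_nonneg ha hb x y) :
        ∫⁻ x, ENNReal.ofReal (1 + a x * b y) ∂unif01 = 1)]
    simp
  refine ⟨⟨?_⟩, f, g⟩
  have := congrArg (fun m => m univ) f
  simpa [Measure.map_apply measurable_fst MeasurableSet.univ] using this

lemma indep_copula : IsCopula indepCopula := by
  refine ⟨by unfold indepCopula; infer_instance, ?_, ?_⟩ <;> simp [indepCopula]

lemma comon_copula : IsCopula comonCopula := by
  have hm : Measurable (fun u : ℝ => (u, u)) := by fun_prop
  refine ⟨Measure.isProbabilityMeasure_map hm.aemeasurable, ?_, ?_⟩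
  · rw [comonCopula, Measure.map_map measurable_fst hm]
    exact Measure.map_id
  · rw [comonCopula, Measure.map_map measurable_snd hm]
    exact Measure.map_id

lemma pert_integral {a b f : ℝ → ℝ} {g : ℝ → ℝ} (ma : Measurable a) (mb : Measurable b)
    (ha : ∀ x, |a x| ≤ 1) (hb : ∀ x, |b x| ≤ 1)
    (hf : Integrable f unif01) (hg : Integrable g unif01) :
    ∫ p, f p.1 * g p.2 ∂(pertC a b) = (∫ x, f x ∂unif01) * (∫ x, g x ∂unif01) +
      (∫ x, a x * f x ∂unif01) * (∫ x, b x * g x ∂unif01) := by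
  rw [pertC, integral_withDensity_eq_integral_toReal_smul (pert_meas ma mb) (by simp)]
  have haf : Integrable (fun x => a x * f x) unif01 :=
    hf.bdd_mul ma.aestronglyMeasurable (c := 1) (by simpa using Filter.Eventually.of_forall ha)
  have hbg : Integrable (fun x => b x * g x) unif01 :=
    hg.bdd_mul mb.aestronglyMeasurable (c := 1) (by simpa using Filter.Eventually.of_forall hb)
  rw [← integral_prod_mul, ← integral_prod_mul, ← integral_add (hf.mul_prod hg) (haf.mul_prod hbg)]
  congr 1; ext p
  rw [ENNReal.toReal_ofReal (pert_nonneg ha hb _ _), smul_eq_mul]; ring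

lemma cdf2_indicator (μ : Measure (ℝ × ℝ)) (u v : ℝ) : cdf2 μ u v =
    ∫ p, (Iic u).indicator (fun _ => (1:ℝ)) p.1 * (Iic v).indicator (fun _ => (1:ℝ)) p.2 ∂μ := by
  have : (fun p : ℝ × ℝ => (Iic u).indicator (fun _ => (1:ℝ)) p.1 *
      (Iic v).indicator (fun _ => (1:ℝ)) p.2) = (Iic u ×ˢ Iic v).indicator (fun _ => (1:ℝ)) := by
    ext p
    simp only [indicator_apply, mem_prod]
    split_ifs <;> simp_all
  rw [this, integral_indicator (measurableSet_Iic.prod measurableSet_Iic)]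
  simp [cdf2, measureReal_def]

lemma copula_var1 {μ : Measure (ℝ × ℝ)} (h : IsCopula μ) {g : ℝ → ℝ}
    (hg : Integrable g unif01) :
    variance (fun p : ℝ × ℝ => g p.1) μ = variance g unif01 ∧
      ∫ p, g p.1 ∂μ = ∫ x, g x ∂unif01 := by
  have h' : AEStronglyMeasurable g (μ.map Prod.fst) := h.fst_marginal ▸ hg.1
  rw [← h.fst_marginal]
  exact ⟨(variance_map h'.aemeasurable measurable_fst.aemeasurable).symm,
    (integral_map measurable_fst.aemeasurable h').symm⟩

lemma copula_var2 {μ : Measure (ℝ × ℝ)} (h : IsCopula μ) {g : ℝ → ℝ}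
    (hg : Integrable g unif01) :
    variance (fun p : ℝ × ℝ => g p.2) μ = variance g unif01 ∧
      ∫ p, g p.2 ∂μ = ∫ x, g x ∂unif01 := by
  have h' : AEStronglyMeasurable g (μ.map Prod.snd) := h.snd_marginal ▸ hg.1
  rw [← h.snd_marginal]
  exact ⟨(variance_map h'.aemeasurable measurable_snd.aemeasurable).symm,
    (integral_map measurable_snd.aemeasurable h').symm⟩

lemma pert_key (g1 g2 : ℝ → ℝ)
    (h1 : ContinuousOn g1 (Set.Icc 0 1)) (h2 : ContinuousOn g2 (Set.Icc 0 1))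
    (hκ : IsConcordanceMeasure
      (fun C => pearson C (fun p => g1 p.1) (fun p => g2 p.2)))
    {a b : ℝ → ℝ} (ma : Measurable a) (mb : Measurable b)
    (ha : ∀ x, |a x| ≤ 1) (hb : ∀ x, |b x| ≤ 1)
    (ia : ∫ x, a x ∂unif01 = 0) (ib : ∫ x, b x ∂unif01 = 0)
    (ja : ∀ x, 0 ≤ ∫ t in Iic x, a t ∂unif01) (jb : ∀ x, 0 ≤ ∫ t in Iic x, b t ∂unif01) :
    0 ≤ (∫ x, a x * g1 x ∂unif01) * (∫ x, b x * g2 x ∂unif01) := by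
  have i1 := integrable_unif01 g1 h1
  have i2 := integrable_unif01 g2 h2
  have hC := pert_copula ma mb ha hb ia ib
  have hle := hκ.coherence indepCopula (pertC a b) indep_copula hC (by
    intro u v
    rw [cdf2_indicator, cdf2_indicator, pert_integral ma mb ha hb
      ((integrable_const _).indicator measurableSet_Iic)
      ((integrable_const _).indicator measurableSet_Iic), indepCopula, integral_prod_mul]
    have e : ∀ (c : ℝ → ℝ) (u : ℝ), ∫ x, c x * (Iic u).indicator (fun _ => (1:ℝ)) x ∂unif01 =
        ∫ x in Iic u, c x ∂unif01 := by
      intro c u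
      rw [← integral_indicator measurableSet_Iic]
      congr 1; ext x; simp [indicator_apply]
    rw [e, e]
    have := mul_nonneg (ja u) (jb v)
    linarith)
  have hind := hκ.independence
  have hM := hκ.comonotone_val
  rw [hind] at hle
  unfold pearson at hle hM
  rw [(copula_var1 comon_copula i1).1, (copula_var2 comon_copula i2).1] at hM
  rw [(copula_var1 hC i1).1, (copula_var2 hC i2).1, (copula_var1 hC i1).2, (copula_var2 hC i2).2,
    pert_integral ma mb ha hb i1 i2, add_sub_cancel_left] at hle
  have hs : 0 < √(variance g1 unif01 * variance g2 unif01) := by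
    refine lt_of_le_of_ne (Real.sqrt_nonneg _) fun h => ?_
    rw [← h] at hM
    simp at hM
  have := mul_nonneg hle hs.le
  rwa [div_mul_cancel₀ _ hs.ne'] at this

/-- If the transformed correlation `κ_{g1,g2}`, built from continuous
functions `g1, g2 : [0,1] → ℝ` via
`κ_{g1,g2}(C) = ρ(g1(U1), g2(U2))` for `(U1,U2) ~ C`, is a measure of concordance
in the sense of Scarsini, then `g1` and `g2` are both increasing or both decreasing. -/
theorem monotonicity_of_g (g1 g2 : ℝ → ℝ)
    (h1 : ContinuousOn g1 (Set.Icc 0 1)) (h2 : ContinuousOn g2 (Set.Icc 0 1))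
    (hκ : IsConcordanceMeasure
      (fun C => pearson C (fun p => g1 p.1) (fun p => g2 p.2))) :
    ∀ u u' v v' : ℝ, 0 ≤ u → u < u' → u' ≤ 1 → 0 ≤ v → v < v' → v' ≤ 1 →
      0 ≤ (g1 u' - g1 u) * (g2 v' - g2 v) := by
  intro u u' v v' hu huu hu' hv hvv hv'
  by_contra hneg
  push Not at hneg
  rcases mul_neg_iff.1 hneg with ⟨p, q⟩ | ⟨p, q⟩
  · obtain ⟨a, ma, ha, ia, ja, ka⟩ := exists_pert g1 h1 u u' hu huu hu' (by linarith)
    obtain ⟨b, mb, hb, ib, jb, kb⟩ := exists_pert (fun x => - g2 x) h2.neg v v' hv hvv hv'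
      (by linarith)
    simp only [mul_neg, integral_neg] at kb
    have := pert_key g1 g2 h1 h2 hκ ma mb ha hb ia ib ja jb
    nlinarith
  · obtain ⟨a, ma, ha, ia, ja, ka⟩ := exists_pert (fun x => - g1 x) h1.neg u u' hu huu hu'
      (by linarith)
    obtain ⟨b, mb, hb, ib, jb, kb⟩ := exists_pert g2 h2 v v' hv hvv hv' (by linarith)
    simp only [mul_neg, integral_neg] at ka
    have := pert_key g1 g2 h1 h2 hκ ma mb ha hb ia ib ja jb
    nlinarith
end
end

section
/- Let G1 and G2 be distribution functions with quantile functions G1^{-1}, G2^{-1} (where G^{-1}(p) = inf{x : G(x) ≥ p} for p ∈ (0,1)), and define the (G1,G2)-transformed rank correlation coefficient κ_{G1,G2}(X1,X2) = ρ(G1^{-1}(F1(X1)), G2^{-1}(F2(X2))) for random variables X1 ~ F1, X2 ~ F2 with continuous margins. Then κ_{G1,G2} is a measure of concordance in the sense of Scarsini if and only if both G1 and G2 are of the same type as some non-degenerate symmetric distribution G with finite second moment (i.e., each Gi is a location-scale transform with positive scale of G, and G is symmetric about some point). -/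
open MeasureTheory ProbabilityTheory Set

noncomputable section

/-- Two distributions on ℝ are of the same type: one is a positive-scale
location-scale transform of the other. -/
def SameType (ν G : Measure ℝ) : Prop :=
  ∃ a b : ℝ, 0 < a ∧ ν = G.map (fun x => a * x + b)

/-- A distribution on ℝ is symmetric (about some point `m`). -/
def SymmetricDist (G : Measure ℝ) : Prop :=
  ∃ m : ℝ, G.map (fun x => 2 * m - x) = G

/-- A distribution on ℝ is non-degenerate: it is not a point mass. -/
def Nondegenerate (G : Measure ℝ) : Prop := ∀ c : ℝ, G ≠ Measure.dirac c

/-- A distribution on ℝ has a finite second moment. -/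
def FiniteSecondMoment (G : Measure ℝ) : Prop := Integrable (fun x : ℝ => x ^ 2) G


namespace TRC

open Filter Topology

lemma unif_prob : IsProbabilityMeasure unif01 := ⟨by simp [unif01]⟩

attribute [local instance] unif_prob

lemma unif_ae : ∀ᵐ u ∂unif01, u ∈ Ioo (0:ℝ) 1 := ae_restrict_mem measurableSet_Ioo

lemma unif_Iic {x : ℝ} (h1 : x ≤ 1) : unif01 (Iic x) = ENNReal.ofReal x := by
  have h : unif01 = volume.restrict (Ioc (0:ℝ) 1) := by
    unfold unif01; exact Measure.restrict_congr_set Ioo_ae_eq_Ioc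
  rw [h, Measure.restrict_apply measurableSet_Iic, inter_comm, Ioc_inter_Iic, min_eq_right h1]
  simp

lemma cdfOf_eq (ν : Measure ℝ) [IsProbabilityMeasure ν] : cdfOf ν = cdf ν := by
  ext x; rw [cdf_eq_real]; rfl

lemma quantile_le_iff (ν : Measure ℝ) [IsProbabilityMeasure ν] {p : ℝ} (hp : p ∈ Ioo (0:ℝ) 1)
    (x : ℝ) : quantileFn (cdfOf ν) p ≤ x ↔ p ≤ cdfOf ν x := by
  rw [cdfOf_eq]
  set S : Set ℝ := {x : ℝ | p ≤ cdf ν x} with hS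
  have hne : S.Nonempty := by
    obtain ⟨y, hy⟩ := ((tendsto_cdf_atTop ν).eventually (lt_mem_nhds hp.2)).exists
    exact ⟨y, le_of_lt hy⟩
  have hbb : BddBelow S := by
    obtain ⟨y, hy⟩ := ((tendsto_cdf_atBot ν).eventually (gt_mem_nhds hp.1)).exists
    refine ⟨y, fun z hz => ?_⟩
    by_contra hlt
    push Not at hlt
    exact absurd (lt_of_le_of_lt (le_trans hz (monotone_cdf ν hlt.le)) hy) (lt_irrefl _)
  constructor
  · intro h
    have hr : Tendsto (cdf ν) (𝓝[>] x) (𝓝 (cdf ν x)) :=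
      ((cdf ν).right_continuous x).tendsto.mono_left (nhdsWithin_mono _ Ioi_subset_Ici_self)
    refine ge_of_tendsto hr ?_
    filter_upwards [self_mem_nhdsWithin] with y hy
    obtain ⟨z, hz, hzy⟩ := (csInf_lt_iff hbb hne).1 (lt_of_le_of_lt h hy)
    exact le_trans hz (monotone_cdf ν hzy.le)
  · intro h
    exact csInf_le hbb h

lemma quantile_mono (ν : Measure ℝ) [IsProbabilityMeasure ν] :
    MonotoneOn (quantileFn (cdfOf ν)) (Ioo 0 1) := by
  intro p hp p' hp' h
  rw [quantile_le_iff ν hp]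
  exact h.trans ((quantile_le_iff ν hp' _).1 le_rfl)

lemma quantile_aem (ν : Measure ℝ) [IsProbabilityMeasure ν] :
    AEMeasurable (quantileFn (cdfOf ν)) unif01 :=
  aemeasurable_restrict_of_monotoneOn measurableSet_Ioo (quantile_mono ν)

lemma quantile_map (ν : Measure ℝ) [IsProbabilityMeasure ν] :
    unif01.map (quantileFn (cdfOf ν)) = ν := by
  have := Measure.isProbabilityMeasure_map (quantile_aem ν)
  refine Measure.ext_of_Iic _ _ fun x => ?_
  rw [Measure.map_apply_of_aemeasurable (quantile_aem ν) measurableSet_Iic]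
  have : unif01 (quantileFn (cdfOf ν) ⁻¹' Iic x) = unif01 (Iic (cdfOf ν x)) := by
    refine measure_congr ?_
    filter_upwards [unif_ae] with u hu
    exact propext (quantile_le_iff ν hu x)
  rw [this, unif_Iic, cdfOf_eq, ofReal_cdf]
  · rw [cdfOf_eq]; exact cdf_le_one ν x

lemma eq_quantile (ν : Measure ℝ) [IsProbabilityMeasure ν] (f : ℝ → ℝ)
    (hm : MonotoneOn f (Ioo 0 1)) (hmap : unif01.map f = ν) (hi : Integrable id ν) :
    f =ᵐ[unif01] quantileFn (cdfOf ν) := by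
  have hf : AEMeasurable f unif01 := aemeasurable_restrict_of_monotoneOn measurableSet_Ioo hm
  have hq := quantile_aem ν
  have hle : ∀ u ∈ Ioo (0:ℝ) 1, quantileFn (cdfOf ν) u ≤ f u := by
    intro u hu
    rw [quantile_le_iff ν hu, cdfOf, ← hmap, Measure.map_apply_of_aemeasurable hf measurableSet_Iic]
    refine (ENNReal.ofReal_le_iff_le_toReal (measure_ne_top _ _)).1 ?_
    rw [← unif_Iic hu.2.le]
    refine measure_mono_ae ?_
    filter_upwards [unif_ae] with w hw hwu
    exact hm hw hu hwu
  have hif : Integrable f unif01 := by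
    rw [← hmap, integrable_map_measure aestronglyMeasurable_id hf] at hi; exact hi
  have hiq : Integrable (quantileFn (cdfOf ν)) unif01 := by
    rw [← quantile_map ν, integrable_map_measure aestronglyMeasurable_id hq] at hi; exact hi
  have e1 : ∫ u, f u ∂unif01 = ∫ x, x ∂ν := by
    rw [← hmap]; exact (integral_map hf aestronglyMeasurable_id).symm
  have e2 : ∫ u, quantileFn (cdfOf ν) u ∂unif01 = ∫ x, x ∂ν := by
    conv_rhs => rw [← quantile_map ν]
    exact (integral_map hq aestronglyMeasurable_id).symm
  have h0 : 0 ≤ᵐ[unif01] fun u => f u - quantileFn (cdfOf ν) u := by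
    filter_upwards [unif_ae] with u hu
    exact sub_nonneg.2 (hle u hu)
  have := (integral_eq_zero_iff_of_nonneg_ae h0 (hif.sub hiq)).1
    (by rw [integral_sub hif hiq, e1, e2, sub_self])
  filter_upwards [this] with u hu
  exact sub_eq_zero.1 hu

lemma flip_mp : MeasurePreserving (fun u : ℝ => 1 - u) unif01 unif01 := by
  have h := (Measure.measurePreserving_sub_left (volume : Measure ℝ) 1).restrict_preimage
    (s := Ioo (0:ℝ) 1) measurableSet_Ioo
  have e : (fun u : ℝ => 1 - u) ⁻¹' Ioo (0:ℝ) 1 = Ioo 0 1 := by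
    ext u; simp only [mem_preimage, mem_Ioo]; constructor <;> rintro ⟨a, b⟩ <;> constructor <;> linarith
  rw [e] at h
  exact h

lemma mem_flip {u : ℝ} (hu : u ∈ Ioo (0:ℝ) 1) : 1 - u ∈ Ioo (0:ℝ) 1 :=
  ⟨by linarith [hu.2], by linarith [hu.1]⟩

lemma comon_copula : IsCopula comonCopula := by
  refine ⟨Measure.isProbabilityMeasure_map (by fun_prop), ?_, ?_⟩ <;>
  · rw [comonCopula, Measure.map_map (by fun_prop) (by fun_prop)]
    exact Measure.map_id

lemma counter_copula : IsCopula counterCopula := by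
  refine ⟨Measure.isProbabilityMeasure_map (by fun_prop), ?_, ?_⟩
  · rw [counterCopula, Measure.map_map (by fun_prop) (by fun_prop)]
    exact Measure.map_id
  · rw [counterCopula, Measure.map_map (by fun_prop) (by fun_prop)]
    exact flip_mp.map_eq

lemma indep_copula : IsCopula indepCopula := by
  refine ⟨by unfold indepCopula; infer_instance, ?_, ?_⟩
  · simp [indepCopula, Measure.map_fst_prod]
  · simp [indepCopula, Measure.map_snd_prod]

lemma fst_mp {C : Measure (ℝ × ℝ)} (hC : IsCopula C) : MeasurePreserving Prod.fst C unif01 :=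
  ⟨measurable_fst, hC.fst_marginal⟩

lemma snd_mp {C : Measure (ℝ × ℝ)} (hC : IsCopula C) : MeasurePreserving Prod.snd C unif01 :=
  ⟨measurable_snd, hC.snd_marginal⟩

/-! Extremal correlation -/

lemma extremal {Ω : Type*} [MeasurableSpace Ω] (μ : Measure Ω) [IsProbabilityMeasure μ]
    (X Y : Ω → ℝ) (hX : MemLp X 2 μ) (hY : MemLp Y 2 μ)
    (h1 : 0 < Var[X; μ]) (h2 : 0 < Var[Y; μ])
    (h : cov[X, Y; μ] = √(Var[X; μ] * Var[Y; μ])) :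
    ∃ b, ∀ᵐ ω ∂μ, Y ω = (√Var[Y; μ] / √Var[X; μ]) * X ω + b := by
  set s1 := √Var[X; μ] with hs1
  set s2 := √Var[Y; μ] with hs2
  have p1 : 0 < s1 := Real.sqrt_pos.2 h1
  have p2 : 0 < s2 := Real.sqrt_pos.2 h2
  have e1 : s1 ^ 2 = Var[X; μ] := Real.sq_sqrt h1.le
  have e2 : s2 ^ 2 = Var[Y; μ] := Real.sq_sqrt h2.le
  have hh : cov[X, Y; μ] = s1 * s2 := by rw [h, Real.sqrt_mul h1.le]
  have hX' := hX.const_mul (s2 / s1)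
  have hv : Var[fun ω => Y ω - s2 / s1 * X ω; μ] = 0 := by
    rw [variance_fun_sub hY hX', variance_const_mul, covariance_const_mul_right, covariance_comm, hh,
      ← e1, ← e2]
    field_simp; ring
  have := ae_eq_integral_of_variance_eq_zero (hY.sub hX') hv
  refine ⟨μ[fun ω => Y ω - s2 / s1 * X ω], ?_⟩
  filter_upwards [this] with ω hω
  have : Y ω - s2 / s1 * X ω = μ[fun ω => Y ω - s2 / s1 * X ω] := hω
  linarith

lemma cov_le {Ω : Type*} [MeasurableSpace Ω] (μ : Measure Ω) [IsProbabilityMeasure μ]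
    (X Y : Ω → ℝ) (hX : MemLp X 2 μ) (hY : MemLp Y 2 μ)
    (h1 : 0 < Var[X; μ]) (h2 : 0 < Var[Y; μ]) :
    cov[X, Y; μ] ≤ √(Var[X; μ] * Var[Y; μ]) := by
  rw [Real.sqrt_mul h1.le]
  set s1 := √Var[X; μ] with hs1
  set s2 := √Var[Y; μ] with hs2
  have p1 : 0 < s1 := Real.sqrt_pos.2 h1
  have p2 : 0 < s2 := Real.sqrt_pos.2 h2
  have e1 : s1 ^ 2 = Var[X; μ] := Real.sq_sqrt h1.le
  have e2 : s2 ^ 2 = Var[Y; μ] := Real.sq_sqrt h2.le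
  have hX' := hX.const_mul (s2 / s1)
  have hv := variance_nonneg (fun ω => Y ω - s2 / s1 * X ω) μ
  rw [variance_fun_sub hY hX', variance_const_mul, covariance_const_mul_right, covariance_comm,
      ← e1, ← e2] at hv
  have : s2 ^ 2 - 2 * (s2 / s1 * cov[X, Y; μ]) + (s2 / s1) ^ 2 * s1 ^ 2
     = 2 * (s2 / s1) * (s1 * s2 - cov[X, Y; μ]) := by field_simp; ring
  rw [this] at hv
  have := nonneg_of_mul_nonneg_right hv (by positivity)
  linarith

/-! Hoeffding -/

def hf (x s : ℝ) : ℝ := (Ici (0:ℝ)).indicator 1 s - (Ici x).indicator 1 s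

lemma hf_eq_pos {x : ℝ} (hx : 0 ≤ x) : hf x = (Ico 0 x).indicator 1 := by
  ext s
  simp only [hf, indicator, mem_Ici, mem_Ico, Pi.one_apply]
  split_ifs <;> first | (exfalso; grind) | norm_num

lemma hf_eq_neg {x : ℝ} (hx : x ≤ 0) : hf x = fun s => - (Ico x 0).indicator 1 s := by
  ext s
  simp only [hf, indicator, mem_Ici, mem_Ico, Pi.one_apply]
  split_ifs <;> first | (exfalso; grind) | norm_num

lemma int_ind (a b : ℝ) : Integrable ((Ico a b).indicator (1 : ℝ → ℝ)) := by
  rw [integrable_indicator_iff measurableSet_Ico]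
  exact integrableOn_const (by simp)

lemma hf_int (x : ℝ) : Integrable (hf x) := by
  rcases le_total 0 x with h | h
  · rw [hf_eq_pos h]; exact int_ind _ _
  · rw [hf_eq_neg h]; exact (int_ind _ _).neg

lemma hf_integral (x : ℝ) : ∫ s, hf x s = x := by
  rcases le_total 0 x with h | h
  · rw [hf_eq_pos h, integral_indicator_one measurableSet_Ico]; simp [h]
  · rw [hf_eq_neg h, integral_neg, integral_indicator_one measurableSet_Ico]; simp [h]

lemma hf_integral_abs (x : ℝ) : ∫ s, |hf x s| = |x| := by
  rcases le_total 0 x with h | h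
  · have : (fun s => |hf x s|) = hf x := by
      ext s; rw [hf_eq_pos h]; exact abs_of_nonneg (indicator_nonneg (by simp) _)
    rw [this, hf_integral, abs_of_nonneg h]
  · have : (fun s => |hf x s|) = fun s => - hf x s := by
      ext s; rw [hf_eq_neg h]; simp only [abs_neg, neg_neg]
      exact abs_of_nonneg (indicator_nonneg (by simp) _)
    rw [this, integral_neg, hf_integral, abs_of_nonpos h]

lemma hf_meas : Measurable (fun p : ℝ × ℝ => hf p.1 p.2) := by
  unfold hf
  refine Measurable.sub ?_ ?_
  · exact (measurable_one.indicator measurableSet_Ici).comp measurable_snd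
  · have : (fun p : ℝ × ℝ => (Ici p.1).indicator (1 : ℝ → ℝ) p.2)
        = {p : ℝ × ℝ | p.1 ≤ p.2}.indicator 1 := by
      ext p; simp [indicator]
    rw [this]
    exact measurable_one.indicator (measurableSet_le measurable_fst measurable_snd)

def KK (P : Measure (ℝ × ℝ)) (z : ℝ × ℝ) : ℝ := ∫ p, hf p.1 z.1 * hf p.2 z.2 ∂P

lemma hoeff (P : Measure (ℝ × ℝ)) [IsProbabilityMeasure P]
    (hi : Integrable (fun p : ℝ × ℝ => p.1 * p.2) P) :
    Integrable (KK P) (volume : Measure (ℝ × ℝ)) ∧ ∫ z, KK P z = ∫ p, p.1 * p.2 ∂P := by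
  have hmeas : Measurable (fun w : (ℝ × ℝ) × (ℝ × ℝ) => hf w.1.1 w.2.1 * hf w.1.2 w.2.2) := by
    have a : Measurable (fun w : (ℝ × ℝ) × (ℝ × ℝ) => hf w.1.1 w.2.1) :=
      hf_meas.comp (g := fun p : ℝ × ℝ => hf p.1 p.2)
        (f := fun w : (ℝ × ℝ) × (ℝ × ℝ) => (w.1.1, w.2.1)) (by fun_prop)
    have b : Measurable (fun w : (ℝ × ℝ) × (ℝ × ℝ) => hf w.1.2 w.2.2) :=
      hf_meas.comp (g := fun p : ℝ × ℝ => hf p.1 p.2)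
        (f := fun w : (ℝ × ℝ) × (ℝ × ℝ) => (w.1.2, w.2.2)) (by fun_prop)
    exact a.mul b
  have hI : Integrable (fun w : (ℝ × ℝ) × (ℝ × ℝ) => hf w.1.1 w.2.1 * hf w.1.2 w.2.2)
      (P.prod (volume : Measure (ℝ × ℝ))) := by
    rw [integrable_prod_iff hmeas.aestronglyMeasurable]
    constructor
    · refine ae_of_all _ fun p => ?_
      exact (hf_int p.1).mul_prod (hf_int p.2)
    · refine hi.norm.congr (ae_of_all _ fun p => ?_)
      simp only [norm_mul, Real.norm_eq_abs]
      rw [Measure.volume_eq_prod, integral_prod_mul (fun s => |hf p.1 s|) (fun s => |hf p.2 s|),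
        hf_integral_abs, hf_integral_abs]
  refine ⟨hI.integral_prod_right, ?_⟩
  have := integral_integral_swap (f := fun (p z : ℝ × ℝ) => hf p.1 z.1 * hf p.2 z.2) hI
  unfold KK
  rw [← this]
  refine integral_congr_ae (ae_of_all _ fun p => ?_)
  simp only
  rw [Measure.volume_eq_prod, integral_prod_mul (hf p.1) (hf p.2), hf_integral, hf_integral]

lemma KK_eq (P : Measure (ℝ × ℝ)) [IsProbabilityMeasure P] (z : ℝ × ℝ) :
    KK P z = (Ici (0:ℝ)).indicator 1 z.1 * (Ici (0:ℝ)).indicator 1 z.2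
      - (Ici (0:ℝ)).indicator 1 z.1 * P.real (Prod.snd ⁻¹' Iic z.2)
      - (Ici (0:ℝ)).indicator 1 z.2 * P.real (Prod.fst ⁻¹' Iic z.1)
      + P.real (Iic z.1 ×ˢ Iic z.2) := by
  set c : ℝ := (Ici (0:ℝ)).indicator 1 z.1
  set d : ℝ := (Ici (0:ℝ)).indicator 1 z.2
  have m1 : MeasurableSet (Prod.fst ⁻¹' Iic z.1 : Set (ℝ × ℝ)) := measurable_fst measurableSet_Iic
  have m2 : MeasurableSet (Prod.snd ⁻¹' Iic z.2 : Set (ℝ × ℝ)) := measurable_snd measurableSet_Iic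
  have m3 : MeasurableSet (Iic z.1 ×ˢ Iic z.2 : Set (ℝ × ℝ)) := measurableSet_Iic.prod measurableSet_Iic
  have e : ∀ p : ℝ × ℝ, hf p.1 z.1 * hf p.2 z.2 = c * d
      - c * (Prod.snd ⁻¹' Iic z.2 : Set (ℝ × ℝ)).indicator 1 p
      - d * (Prod.fst ⁻¹' Iic z.1 : Set (ℝ × ℝ)).indicator 1 p
      + (Iic z.1 ×ˢ Iic z.2 : Set (ℝ × ℝ)).indicator 1 p := by
    intro p
    simp only [hf]
    change (c - _) * (d - _) = _
    simp only [indicator, mem_Ici, mem_preimage, mem_Iic, mem_prod, Pi.one_apply]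
    split_ifs <;> first | (exfalso; tauto) | ring
  have i1 : ∀ S : Set (ℝ × ℝ), MeasurableSet S → Integrable (S.indicator (1 : ℝ × ℝ → ℝ)) P :=
    fun S hS => (integrable_const (1:ℝ)).indicator hS
  unfold KK
  rw [integral_congr_ae (ae_of_all _ e), integral_add, integral_sub, integral_sub,
    integral_const_mul, integral_const_mul, integral_const_mul, integral_indicator_one m1, integral_indicator_one m2,
    integral_indicator_one m3]
  · simp
  · exact integrable_const _
  · exact (i1 _ m2).const_mul _
  · exact (integrable_const _).sub ((i1 _ m2).const_mul _)
  · exact (i1 _ m1).const_mul _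
  · exact ((integrable_const _).sub ((i1 _ m2).const_mul _)).sub ((i1 _ m1).const_mul _)
  · exact i1 _ m3

/-! Copulas -/

abbrev qf (ν : Measure ℝ) : ℝ → ℝ := quantileFn (cdfOf ν)

lemma cov_congr {Ω : Type*} [MeasurableSpace Ω] {μ : Measure Ω} {X X' Y Y' : Ω → ℝ}
    (hX : X =ᵐ[μ] X') (hY : Y =ᵐ[μ] Y') : cov[X, Y; μ] = cov[X', Y'; μ] := by
  unfold covariance
  rw [integral_congr_ae hX, integral_congr_ae hY]
  refine integral_congr_ae ?_
  filter_upwards [hX, hY] with ω h1 h2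
  rw [h1, h2]

lemma pearson_eq (f g : ℝ → ℝ) (Lf : MemLp f 2 unif01) (Lg : MemLp g 2 unif01)
    {C : Measure (ℝ × ℝ)} (hC : IsCopula C) :
    pearson C (fun p => f p.1) (fun p => g p.2) =
      cov[fun p => f p.1, fun p => g p.2; C] / √(Var[f; unif01] * Var[g; unif01]) := by
  have := hC.prob
  have e : cov[fun p => f p.1, fun p => g p.2; C] = _ :=
    covariance_eq_sub (Lf.comp_measurePreserving (fst_mp hC)) (Lg.comp_measurePreserving (snd_mp hC))
  unfold pearson
  rw [(fst_mp hC).variance_fun_comp Lf.aemeasurable, (snd_mp hC).variance_fun_comp Lg.aemeasurable, e]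
  rfl

section
variable (ν1 ν2 : Measure ℝ) [IsProbabilityMeasure ν1] [IsProbabilityMeasure ν2]

def law (C : Measure (ℝ × ℝ)) : Measure (ℝ × ℝ) := C.map (fun p => (qf ν1 p.1, qf ν2 p.2))

lemma aem1 {C : Measure (ℝ × ℝ)} (hC : IsCopula C) : AEMeasurable (fun p : ℝ × ℝ => qf ν1 p.1) C :=
  ((quantile_aem ν1).aestronglyMeasurable.comp_measurePreserving (fst_mp hC)).aemeasurable

lemma aem2 {C : Measure (ℝ × ℝ)} (hC : IsCopula C) : AEMeasurable (fun p : ℝ × ℝ => qf ν2 p.2) C :=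
  ((quantile_aem ν2).aestronglyMeasurable.comp_measurePreserving (snd_mp hC)).aemeasurable

lemma aem {C : Measure (ℝ × ℝ)} (hC : IsCopula C) :
    AEMeasurable (fun p : ℝ × ℝ => (qf ν1 p.1, qf ν2 p.2)) C := (aem1 ν1 hC).prodMk (aem2 ν2 hC)

lemma law_prob {C : Measure (ℝ × ℝ)} (hC : IsCopula C) : IsProbabilityMeasure (law ν1 ν2 C) := by
  have := hC.prob
  exact Measure.isProbabilityMeasure_map (aem ν1 ν2 hC)

lemma law_fst {C : Measure (ℝ × ℝ)} (hC : IsCopula C) (x : ℝ) :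
    (law ν1 ν2 C).real (Prod.fst ⁻¹' Iic x) = ν1.real (Iic x) := by
  have : (law ν1 ν2 C).map Prod.fst = ν1 := by
    rw [law, AEMeasurable.map_map_of_aemeasurable measurable_fst.aemeasurable (aem ν1 ν2 hC)]
    conv_rhs => rw [← quantile_map ν1, ← hC.fst_marginal]
    rw [AEMeasurable.map_map_of_aemeasurable (by rw [hC.fst_marginal]; exact quantile_aem ν1)
      measurable_fst.aemeasurable]
    rfl
  conv_rhs => rw [← this]
  rw [map_measureReal_apply measurable_fst measurableSet_Iic]

lemma law_snd {C : Measure (ℝ × ℝ)} (hC : IsCopula C) (x : ℝ) :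
    (law ν1 ν2 C).real (Prod.snd ⁻¹' Iic x) = ν2.real (Iic x) := by
  have : (law ν1 ν2 C).map Prod.snd = ν2 := by
    rw [law, AEMeasurable.map_map_of_aemeasurable measurable_snd.aemeasurable (aem ν1 ν2 hC)]
    conv_rhs => rw [← quantile_map ν2, ← hC.snd_marginal]
    rw [AEMeasurable.map_map_of_aemeasurable (by rw [hC.snd_marginal]; exact quantile_aem ν2)
      measurable_snd.aemeasurable]
    rfl
  conv_rhs => rw [← this]
  rw [map_measureReal_apply measurable_snd measurableSet_Iic]

lemma law_rect {C : Measure (ℝ × ℝ)} (hC : IsCopula C) (s t : ℝ) :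
    (law ν1 ν2 C).real (Iic s ×ˢ Iic t) = cdf2 C (cdfOf ν1 s) (cdfOf ν2 t) := by
  unfold cdf2 Measure.real law
  rw [Measure.map_apply_of_aemeasurable (aem ν1 ν2 hC) (measurableSet_Iic.prod measurableSet_Iic)]
  congr 1
  refine measure_congr ?_
  filter_upwards [(fst_mp hC).quasiMeasurePreserving.ae unif_ae,
    (snd_mp hC).quasiMeasurePreserving.ae unif_ae] with p h1 h2
  exact propext (and_congr (quantile_le_iff ν1 h1 s) (quantile_le_iff ν2 h2 t))

lemma KK_law {C : Measure (ℝ × ℝ)} (hC : IsCopula C) (z : ℝ × ℝ) :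
    KK (law ν1 ν2 C) z = (Ici (0:ℝ)).indicator 1 z.1 * (Ici (0:ℝ)).indicator 1 z.2
      - (Ici (0:ℝ)).indicator 1 z.1 * ν2.real (Iic z.2)
      - (Ici (0:ℝ)).indicator 1 z.2 * ν1.real (Iic z.1)
      + cdf2 C (cdfOf ν1 z.1) (cdfOf ν2 z.2) := by
  have := law_prob ν1 ν2 hC
  rw [KK_eq, law_fst ν1 ν2 hC, law_snd ν1 ν2 hC, law_rect ν1 ν2 hC]

lemma hoeff_cop (L1 : MemLp (qf ν1) 2 unif01) (L2 : MemLp (qf ν2) 2 unif01)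
    {C : Measure (ℝ × ℝ)} (hC : IsCopula C) :
    Integrable (KK (law ν1 ν2 C)) (volume : Measure (ℝ × ℝ)) ∧
    cov[fun p => qf ν1 p.1, fun p => qf ν2 p.2; C] = (∫ z, KK (law ν1 ν2 C) z)
      - (∫ u, qf ν1 u ∂unif01) * ∫ u, qf ν2 u ∂unif01 := by
  have := hC.prob
  have := law_prob ν1 ν2 hC
  have M1 := L1.comp_measurePreserving (fst_mp hC)
  have M2 := L2.comp_measurePreserving (snd_mp hC)
  have sm : ∀ P : Measure (ℝ × ℝ), AEStronglyMeasurable (fun p : ℝ × ℝ => p.1 * p.2) P := fun P =>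
    (measurable_fst.mul measurable_snd).aestronglyMeasurable
  have hi : Integrable (fun p : ℝ × ℝ => p.1 * p.2) (law ν1 ν2 C) := by
    rw [law, integrable_map_measure (sm _) (aem ν1 ν2 hC)]
    exact M1.integrable_mul M2
  obtain ⟨h1, h2⟩ := hoeff _ hi
  refine ⟨h1, ?_⟩
  rw [h2, law, integral_map (aem ν1 ν2 hC) (sm _)]
  have := covariance_eq_sub M1 M2
  have i1 : ∫ p, (qf ν1 ∘ Prod.fst) p ∂C = ∫ u, qf ν1 u ∂unif01 := by
    rw [← hC.fst_marginal, integral_map measurable_fst.aemeasurable]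
    · rfl
    · rw [hC.fst_marginal]; exact L1.aestronglyMeasurable
  have i2 : ∫ p, (qf ν2 ∘ Prod.snd) p ∂C = ∫ u, qf ν2 u ∂unif01 := by
    rw [← hC.snd_marginal, integral_map measurable_snd.aemeasurable]
    · rfl
    · rw [hC.snd_marginal]; exact L2.aestronglyMeasurable
  rw [i1, i2] at this
  exact this

lemma cov_mono (L1 : MemLp (qf ν1) 2 unif01) (L2 : MemLp (qf ν2) 2 unif01)
    {C D : Measure (ℝ × ℝ)} (hC : IsCopula C) (hD : IsCopula D)
    (h : ∀ u v, cdf2 C u v ≤ cdf2 D u v) :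
    cov[fun p => qf ν1 p.1, fun p => qf ν2 p.2; C] ≤
      cov[fun p => qf ν1 p.1, fun p => qf ν2 p.2; D] := by
  obtain ⟨c1, c2⟩ := hoeff_cop ν1 ν2 L1 L2 hC
  obtain ⟨d1, d2⟩ := hoeff_cop ν1 ν2 L1 L2 hD
  rw [c2, d2]
  refine sub_le_sub_right (integral_mono c1 d1 fun z => ?_) _
  rw [KK_law ν1 ν2 hC, KK_law ν1 ν2 hD]
  linarith [h (cdfOf ν1 z.1) (cdfOf ν2 z.2)]

lemma frechet_upper {C : Measure (ℝ × ℝ)} (hC : IsCopula C) (u v : ℝ) :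
    cdf2 C u v ≤ cdf2 comonCopula u v := by
  have := hC.prob
  unfold cdf2
  refine ENNReal.toReal_mono (by have := comon_copula.prob; exact measure_ne_top _ _) ?_
  rw [comonCopula, Measure.map_apply (by fun_prop) (measurableSet_Iic.prod measurableSet_Iic)]
  rcases le_total u v with h | h
  · have : (fun u : ℝ => (u, u)) ⁻¹' (Iic u ×ˢ Iic v) = Iic u := by
      ext w; simp only [mem_preimage, mem_prod, mem_Iic]; grind
    rw [this, ← hC.fst_marginal, Measure.map_apply measurable_fst measurableSet_Iic]
    exact measure_mono fun p hp => hp.1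
  · have : (fun u : ℝ => (u, u)) ⁻¹' (Iic u ×ˢ Iic v) = Iic v := by
      ext w; simp only [mem_preimage, mem_prod, mem_Iic]; grind
    rw [this, ← hC.snd_marginal, Measure.map_apply measurable_snd measurableSet_Iic]
    exact measure_mono fun p hp => hp.2

lemma frechet_lower {C : Measure (ℝ × ℝ)} (hC : IsCopula C) (u v : ℝ) :
    cdf2 counterCopula u v ≤ cdf2 C u v := by
  have := hC.prob
  have h : ∀ D : Measure (ℝ × ℝ), IsCopula D →
      unif01.real (Iic u) + unif01.real (Iic v) =
        D.real (Prod.fst ⁻¹' Iic u ∪ Prod.snd ⁻¹' Iic v) + cdf2 D u v := by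
    intro D hD
    have := hD.prob
    rw [← (fst_mp hD).measureReal_preimage measurableSet_Iic.nullMeasurableSet,
      ← (snd_mp hD).measureReal_preimage measurableSet_Iic.nullMeasurableSet]
    exact (measureReal_union_add_inter (measurable_snd measurableSet_Iic)).symm
  by_cases huv : 1 - v ≤ u
  · have h1 := h _ hC
    have h2 := h _ counter_copula
    have h3 : counterCopula.real (Prod.fst ⁻¹' Iic u ∪ Prod.snd ⁻¹' Iic v) = 1 := by
      rw [counterCopula, map_measureReal_apply (by fun_prop)
        ((measurable_fst measurableSet_Iic).union (measurable_snd measurableSet_Iic))]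
      have : (fun u : ℝ => (u, 1 - u)) ⁻¹' (Prod.fst ⁻¹' Iic u ∪ Prod.snd ⁻¹' Iic v) = univ := by
        ext w; simp only [mem_preimage, mem_union, mem_Iic, mem_univ, iff_true]; grind
      rw [this]; simp
    have h4 : C.real (Prod.fst ⁻¹' Iic u ∪ Prod.snd ⁻¹' Iic v) ≤ 1 := measureReal_le_one
    linarith
  · have : cdf2 counterCopula u v = 0 := by
      unfold cdf2
      rw [counterCopula, Measure.map_apply (by fun_prop) (measurableSet_Iic.prod measurableSet_Iic)]
      have : (fun u : ℝ => (u, 1 - u)) ⁻¹' (Iic u ×ˢ Iic v) = ∅ := by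
        ext w; simp only [mem_preimage, mem_prod, mem_Iic, mem_empty_iff_false, iff_false]; grind
      rw [this]; simp
    rw [this]
    exact ENNReal.toReal_nonneg

lemma cov_cont (L1 : MemLp (qf ν1) 2 unif01) (L2 : MemLp (qf ν2) 2 unif01)
    (Cs : ℕ → Measure (ℝ × ℝ)) (C : Measure (ℝ × ℝ))
    (hCs : ∀ n, IsCopula (Cs n)) (hC : IsCopula C)
    (h : ∀ u v, Tendsto (fun n => cdf2 (Cs n) u v) atTop (𝓝 (cdf2 C u v))) :
    Tendsto (fun n => cov[fun p => qf ν1 p.1, fun p => qf ν2 p.2; Cs n]) atTop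
      (𝓝 (cov[fun p => qf ν1 p.1, fun p => qf ν2 p.2; C])) := by
  rw [(hoeff_cop ν1 ν2 L1 L2 hC).2]
  simp_rw [fun n => (hoeff_cop ν1 ν2 L1 L2 (hCs n)).2]
  refine Tendsto.sub_const ?_ _
  have iM := (hoeff_cop ν1 ν2 L1 L2 comon_copula).1
  have iW := (hoeff_cop ν1 ν2 L1 L2 counter_copula).1
  refine tendsto_integral_of_dominated_convergence
    (fun z => |KK (law ν1 ν2 comonCopula) z| + |KK (law ν1 ν2 counterCopula) z|)
    (fun n => (hoeff_cop ν1 ν2 L1 L2 (hCs n)).1.aestronglyMeasurable) (iM.abs.add iW.abs) ?_ ?_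
  · intro n
    refine ae_of_all _ fun z => ?_
    have a : KK (law ν1 ν2 (Cs n)) z ≤ KK (law ν1 ν2 comonCopula) z := by
      rw [KK_law ν1 ν2 (hCs n), KK_law ν1 ν2 comon_copula]
      linarith [frechet_upper (hCs n) (cdfOf ν1 z.1) (cdfOf ν2 z.2)]
    have b : KK (law ν1 ν2 counterCopula) z ≤ KK (law ν1 ν2 (Cs n)) z := by
      rw [KK_law ν1 ν2 (hCs n), KK_law ν1 ν2 counter_copula]
      linarith [frechet_lower (hCs n) (cdfOf ν1 z.1) (cdfOf ν2 z.2)]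
    rw [Real.norm_eq_abs, abs_le]
    constructor
    · linarith [neg_abs_le (KK (law ν1 ν2 counterCopula) z), abs_nonneg (KK (law ν1 ν2 comonCopula) z)]
    · linarith [le_abs_self (KK (law ν1 ν2 comonCopula) z), abs_nonneg (KK (law ν1 ν2 counterCopula) z)]
  · refine ae_of_all _ fun z => ?_
    rw [KK_law ν1 ν2 hC]
    simp_rw [fun n => KK_law ν1 ν2 (hCs n)]
    exact (h _ _).const_add _

end

section
variable (ν1 ν2 : Measure ℝ) [IsProbabilityMeasure ν1] [IsProbabilityMeasure ν2]

lemma pearson_comon (f g : ℝ → ℝ) (hf : AEMeasurable f unif01) (hg : AEMeasurable g unif01) :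
    pearson comonCopula (fun p => f p.1) (fun p => g p.2) = pearson unif01 f g := by
  have hC := comon_copula
  have hf' : AEStronglyMeasurable (fun p : ℝ × ℝ => f p.1) _ :=
    hf.aestronglyMeasurable.comp_measurePreserving (fst_mp hC)
  have hg' : AEStronglyMeasurable (fun p : ℝ × ℝ => g p.2) _ :=
    hg.aestronglyMeasurable.comp_measurePreserving (snd_mp hC)
  have hfg : AEStronglyMeasurable (fun p : ℝ × ℝ => f p.1 * g p.2) _ := hf'.mul hg'
  unfold pearson
  rw [(fst_mp hC).variance_fun_comp hf, (snd_mp hC).variance_fun_comp hg]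
  unfold comonCopula at *
  rw [integral_map (by fun_prop) hfg, integral_map (by fun_prop) hf',
    integral_map (by fun_prop) hg']

lemma pearson_counter (f g : ℝ → ℝ) (hf : AEMeasurable f unif01) (hg : AEMeasurable g unif01) :
    pearson counterCopula (fun p => f p.1) (fun p => g p.2)
      = pearson unif01 f (fun u => g (1 - u)) := by
  have hC := counter_copula
  have hf' : AEStronglyMeasurable (fun p : ℝ × ℝ => f p.1) _ :=
    hf.aestronglyMeasurable.comp_measurePreserving (fst_mp hC)
  have hg' : AEStronglyMeasurable (fun p : ℝ × ℝ => g p.2) _ :=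
    hg.aestronglyMeasurable.comp_measurePreserving (snd_mp hC)
  have hfg : AEStronglyMeasurable (fun p : ℝ × ℝ => f p.1 * g p.2) _ := hf'.mul hg'
  unfold pearson
  rw [(fst_mp hC).variance_fun_comp hf, (snd_mp hC).variance_fun_comp hg,
    flip_mp.variance_fun_comp hg]
  unfold counterCopula at *
  rw [integral_map (by fun_prop) hfg, integral_map (by fun_prop) hf',
    integral_map (by fun_prop) hg']

lemma forward (h : IsConcordanceMeasure (fun C => pearson C
        (fun p => quantileFn (cdfOf ν1) p.1) (fun p => quantileFn (cdfOf ν2) p.2))) :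
    ∃ G : Measure ℝ, IsProbabilityMeasure G ∧ Nondegenerate G ∧ SymmetricDist G ∧
          FiniteSecondMoment G ∧ SameType ν1 G ∧ SameType ν2 G := by
  have a1 := quantile_aem ν1
  have a2 := quantile_aem ν2
  have hM := h.comonotone_val
  have hW := h.countermonotone_val
  rw [pearson_comon _ _ a1 a2] at hM
  rw [pearson_counter _ _ a1 a2] at hW
  have a2' : AEMeasurable (fun u => quantileFn (cdfOf ν2) (1 - u)) unif01 :=
    (a2.aestronglyMeasurable.comp_measurePreserving flip_mp).aemeasurable
  have v2' := flip_mp.variance_fun_comp a2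
  unfold pearson at hM hW
  rw [v2'] at hW
  have hs : √(Var[quantileFn (cdfOf ν1); unif01] * Var[quantileFn (cdfOf ν2); unif01]) ≠ 0 := by
    intro h0; rw [h0] at hM; simp at hM
  have hs' : Var[quantileFn (cdfOf ν1); unif01] * Var[quantileFn (cdfOf ν2); unif01] ≠ 0 := by
    intro h0; rw [h0] at hs; simp at hs
  have p1 : 0 < Var[quantileFn (cdfOf ν1); unif01] :=
    lt_of_le_of_ne (variance_nonneg _ _) (Ne.symm (left_ne_zero_of_mul hs'))
  have p2 : 0 < Var[quantileFn (cdfOf ν2); unif01] :=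
    lt_of_le_of_ne (variance_nonneg _ _) (Ne.symm (right_ne_zero_of_mul hs'))
  have L1 := memLp_two_of_variance_ne_zero a1.aestronglyMeasurable p1.ne'
  have L2 := memLp_two_of_variance_ne_zero a2.aestronglyMeasurable p2.ne'
  have L2' : MemLp (fun u => quantileFn (cdfOf ν2) (1 - u)) 2 unif01 :=
    L2.comp_measurePreserving flip_mp
  rw [div_eq_iff hs] at hM hW
  obtain ⟨b, hb⟩ := extremal unif01 _ _ L1 L2 p1 p2 (by
    rw [covariance_eq_sub L1 L2, ← one_mul (√_), ← hM]; rfl)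
  have vn : Var[fun u => -quantileFn (cdfOf ν1) u; unif01] = Var[quantileFn (cdfOf ν1); unif01] :=
    variance_fun_neg
  obtain ⟨d, hd⟩ := extremal unif01 (fun u => - quantileFn (cdfOf ν1) u) _ L1.neg L2'
    (by rw [vn]; exact p1) (by rw [v2']; exact p2) (by
    rw [vn, v2', covariance_fun_neg_left, covariance_eq_sub L1 L2']
    have : (∫ u, quantileFn (cdfOf ν1) u * quantileFn (cdfOf ν2) (1 - u) ∂unif01)
      = ∫ u, (quantileFn (cdfOf ν1) * fun u => quantileFn (cdfOf ν2) (1 - u)) u ∂unif01 := rfl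
    rw [this] at hW
    linarith)
  rw [vn, v2'] at hd
  set a := √Var[quantileFn (cdfOf ν2); unif01] / √Var[quantileFn (cdfOf ν1); unif01] with ha
  have pa : 0 < a := div_pos (Real.sqrt_pos.2 p2) (Real.sqrt_pos.2 p1)
  have m1 : ν2 = ν1.map (fun x => a * x + b) := by
    conv_lhs => rw [← quantile_map ν2]
    conv_rhs => rw [← quantile_map ν1]
    rw [AEMeasurable.map_map_of_aemeasurable (by fun_prop) a1]
    exact Measure.map_congr hb
  have m2 : ν2 = ν1.map (fun x => a * (-x) + d) := by
    conv_lhs => rw [← quantile_map ν2, ← flip_mp.map_eq]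
    conv_rhs => rw [← quantile_map ν1]
    rw [AEMeasurable.map_map_of_aemeasurable (by fun_prop) a1,
      AEMeasurable.map_map_of_aemeasurable (by rw [flip_mp.map_eq]; exact a2) (by fun_prop)]
    exact Measure.map_congr hd
  refine ⟨ν1, inferInstance, ?_, ?_, ?_, ⟨1, 0, one_pos, ?_⟩, ⟨a, b, pa, m1⟩⟩
  · intro c hc
    have : Var[quantileFn (cdfOf ν1); unif01] = 0 := by
      rw [← variance_id_map a1, quantile_map ν1, hc, variance_dirac]
    exact p1.ne' this
  · refine ⟨(d - b) / (2 * a), ?_⟩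
    have e : (ν1.map (fun x => a * x + b)).map (fun y => (y - b) / a)
        = (ν1.map (fun x => a * (-x) + d)).map (fun y => (y - b) / a) := by rw [← m1, ← m2]
    rw [Measure.map_map (by fun_prop) (by fun_prop), Measure.map_map (by fun_prop) (by fun_prop)] at e
    have e1 : (fun y => (y - b) / a) ∘ (fun x => a * x + b) = id := by
      ext x; simp only [Function.comp, id]; field_simp; ring
    have e2 : (fun y => (y - b) / a) ∘ (fun x => a * (-x) + d)
        = fun x => 2 * ((d - b) / (2 * a)) - x := by
      ext x; simp only [Function.comp]; field_simp; ring
    rw [e1, e2, Measure.map_id] at e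
    exact e.symm
  · have := L1.integrable_sq
    unfold FiniteSecondMoment
    rw [← quantile_map ν1, integrable_map_measure (by fun_prop) a1]
    exact this
  · simp

lemma backward (h : ∃ G : Measure ℝ, IsProbabilityMeasure G ∧ Nondegenerate G ∧ SymmetricDist G ∧
          FiniteSecondMoment G ∧ SameType ν1 G ∧ SameType ν2 G) :
    IsConcordanceMeasure (fun C => pearson C
        (fun p => quantileFn (cdfOf ν1) p.1) (fun p => quantileFn (cdfOf ν2) p.2)) := by
  obtain ⟨G, hG, hnd, ⟨m, hm⟩, hsq, ⟨a1, b1, pa1, e1⟩, ⟨a2, b2, pa2, e2⟩⟩ := h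
  have aq := quantile_aem G
  have LG : MemLp id 2 G := (memLp_two_iff_integrable_sq aestronglyMeasurable_id).2 hsq
  have Lq : MemLp (qf G) 2 unif01 := by
    rw [← quantile_map G, memLp_map_measure_iff aestronglyMeasurable_id aq] at LG; exact LG
  have key : ∀ (ν : Measure ℝ) [IsProbabilityMeasure ν] (a b : ℝ), 0 < a →
      ν = G.map (fun x => a * x + b) → (fun u => a * qf G u + b) =ᵐ[unif01] qf ν := by
    intro ν _ a b ha e
    refine eq_quantile ν _ ?_ ?_ ?_
    · intro u hu v hv huv
      have := quantile_mono G hu hv huv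
      simp only
      gcongr
    · rw [e]
      conv_rhs => rw [← quantile_map G]
      rw [AEMeasurable.map_map_of_aemeasurable (by fun_prop) aq]
      rfl
    · rw [e, integrable_map_measure aestronglyMeasurable_id (by fun_prop)]
      exact ((LG.integrable one_le_two).const_mul a).add (integrable_const b)
  have k1 := key ν1 a1 b1 pa1 e1
  have k2 := key ν2 a2 b2 pa2 e2
  have kf : (fun u => 2 * m - qf G (1 - u)) =ᵐ[unif01] qf G := by
    refine eq_quantile G _ ?_ ?_ (LG.integrable one_le_two)
    · intro u hu v hv huv
      have := quantile_mono G (mem_flip hv) (mem_flip hu) (by linarith)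
      simp only
      linarith
    · conv_rhs => rw [← hm, ← quantile_map G, ← flip_mp.map_eq]
      have aq' : AEMeasurable (quantileFn (cdfOf G)) (unif01.map fun u => 1 - u) := by
        rw [flip_mp.map_eq]; exact aq
      rw [AEMeasurable.map_map_of_aemeasurable (by fun_prop) aq']
      exact (AEMeasurable.map_map_of_aemeasurable (aq'.const_sub (2 * m)) (by fun_prop)).symm
  have lin : ∀ (ν : Measure ℝ) (a b : ℝ), (fun u => a * qf G u + b) =ᵐ[unif01] qf ν →
      MemLp (qf ν) 2 unif01 ∧ Var[qf ν; unif01] = a ^ 2 * Var[qf G; unif01] := by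
    intro ν a b k
    constructor
    · exact ((Lq.const_mul a).add (memLp_const b)).ae_eq k
    · rw [← variance_congr k, variance_add_const (Lq.const_mul a).aestronglyMeasurable,
        variance_const_mul]
  obtain ⟨L1, v1⟩ := lin ν1 a1 b1 k1
  obtain ⟨L2, v2⟩ := lin ν2 a2 b2 k2
  have pv : 0 < Var[qf G; unif01] := by
    refine lt_of_le_of_ne (variance_nonneg _ _) fun h0 => ?_
    have := ae_eq_integral_of_variance_eq_zero Lq h0.symm
    refine hnd (∫ x, qf G x ∂unif01) ?_
    conv_lhs => rw [← quantile_map G]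
    rw [Measure.map_congr this, Measure.map_const]
    simp
  have sq : √(Var[qf ν1; unif01] * Var[qf ν2; unif01]) = a1 * a2 * Var[qf G; unif01] := by
    rw [v1, v2, Real.sqrt_eq_iff_eq_sq (by positivity) (by positivity)]; ring
  have psq : 0 < √(Var[qf ν1; unif01] * Var[qf ν2; unif01]) := by rw [sq]; positivity
  have P : ∀ C, IsCopula C → pearson C (fun p => qf ν1 p.1) (fun p => qf ν2 p.2) =
      cov[fun p => qf ν1 p.1, fun p => qf ν2 p.2; C] / √(Var[qf ν1; unif01] * Var[qf ν2; unif01]) :=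
    fun C hC => pearson_eq _ _ L1 L2 hC
  have R : ∀ C, IsCopula C → pearson C (fun p => qf ν1 p.1) (fun p => qf ν2 p.2) =
      cov[fun p => qf G p.1, fun p => qf G p.2; C] / Var[qf G; unif01] := by
    intro C hC
    have := hC.prob
    have M1 : MemLp (fun p : ℝ × ℝ => qf G p.1) 2 C := Lq.comp_measurePreserving (fst_mp hC)
    have M2 : MemLp (fun p : ℝ × ℝ => qf G p.2) 2 C := Lq.comp_measurePreserving (snd_mp hC)
    have c1 : (fun p : ℝ × ℝ => qf ν1 p.1) =ᵐ[C] fun p => a1 * qf G p.1 + b1 :=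
      (fst_mp hC).quasiMeasurePreserving.ae k1.symm
    have c2 : (fun p : ℝ × ℝ => qf ν2 p.2) =ᵐ[C] fun p => a2 * qf G p.2 + b2 :=
      (snd_mp hC).quasiMeasurePreserving.ae k2.symm
    rw [P C hC, sq, cov_congr c1 c2,
      covariance_add_const_left ((M1.integrable one_le_two).const_mul a1),
      covariance_add_const_right ((M2.integrable one_le_two).const_mul a2),
      covariance_const_mul_left, covariance_const_mul_right]
    field_simp
  have cs : ∀ C, IsCopula C → IsCopula (C.map (fun p : ℝ × ℝ => (p.1, 1 - p.2))) := by
    intro C hC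
    have := hC.prob
    refine ⟨Measure.isProbabilityMeasure_map (by fun_prop), ?_, ?_⟩
    · rw [Measure.map_map (by fun_prop) (by fun_prop)]
      exact hC.fst_marginal
    · rw [Measure.map_map (by fun_prop) (by fun_prop)]
      exact (flip_mp.comp (snd_mp hC)).map_eq
  have CS : ∀ C, IsCopula C → pearson (C.map (fun p : ℝ × ℝ => (p.1, 1 - p.2)))
      (fun p => qf ν1 p.1) (fun p => qf ν2 p.2)
      = - pearson C (fun p => qf ν1 p.1) (fun p => qf ν2 p.2) := by
    intro C hC
    have := hC.prob
    have hC' := cs C hC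
    have M2 : MemLp (fun p : ℝ × ℝ => qf G p.2) 2 C := Lq.comp_measurePreserving (snd_mp hC)
    rw [R _ hC', R _ hC, covariance_map_fun (aem1 G hC').aestronglyMeasurable
      (aem2 G hC').aestronglyMeasurable (by fun_prop)]
    have c2 : (fun p : ℝ × ℝ => qf G (1 - p.2)) =ᵐ[C] fun p => 2 * m - qf G p.2 := by
      filter_upwards [(snd_mp hC).quasiMeasurePreserving.ae kf] with p hp
      linarith
    simp only
    rw [cov_congr (Filter.EventuallyEq.refl _ _) c2,
      covariance_const_sub_right (M2.integrable one_le_two), neg_div]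
  have MV : pearson comonCopula (fun p => qf ν1 p.1) (fun p => qf ν2 p.2) = 1 := by
    rw [R _ comon_copula, div_eq_one_iff_eq pv.ne', ← covariance_self Lq.aemeasurable]
    have h1 := aem1 G comon_copula
    have h2 := aem2 G comon_copula
    unfold comonCopula at *
    rw [covariance_map_fun h1.aestronglyMeasurable h2.aestronglyMeasurable (by fun_prop)]
  refine ⟨?_, ?_, ?_, MV, ?_, ?_, CS, ?_⟩
  · intro C hC
    have := hC.prob
    have hC' : IsCopula (C.map Prod.swap) := by
      refine ⟨Measure.isProbabilityMeasure_map (by fun_prop), ?_, ?_⟩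
      · rw [Measure.map_map (by fun_prop) (by fun_prop)]; exact hC.snd_marginal
      · rw [Measure.map_map (by fun_prop) (by fun_prop)]; exact hC.fst_marginal
    have r1 := R _ hC'
    have r2 := R _ hC
    rw [covariance_map_fun (aem1 G hC').aestronglyMeasurable
      (aem2 G hC').aestronglyMeasurable (by fun_prop), covariance_comm] at r1
    exact r1.trans r2.symm
  · intro C D hC hD hCD
    have := cov_mono ν1 ν2 L1 L2 hC hD hCD
    have r1 := P _ hC
    have r2 := P _ hD
    simp only [qf] at *
    rw [r1, r2]
    gcongr
  · intro C hC
    have := hC.prob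
    have r1 := P _ hC
    have M1 : MemLp (fun p : ℝ × ℝ => qf ν1 p.1) 2 C := L1.comp_measurePreserving (fst_mp hC)
    have M2 : MemLp (fun p : ℝ × ℝ => qf ν2 p.2) 2 C := L2.comp_measurePreserving (snd_mp hC)
    have w1 : Var[fun p : ℝ × ℝ => qf ν1 p.1; C] = _ := (fst_mp hC).variance_fun_comp L1.aemeasurable
    have w2 : Var[fun p : ℝ × ℝ => qf ν2 p.2; C] = _ := (snd_mp hC).variance_fun_comp L2.aemeasurable
    have q1 : 0 < Var[qf ν1; unif01] := by rw [v1]; positivity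
    have q2 : 0 < Var[qf ν2; unif01] := by rw [v2]; positivity
    have u := cov_le C _ _ M1 M2 (by rw [w1]; exact q1) (by rw [w2]; exact q2)
    have l := cov_le C (fun p => - qf ν1 p.1) _ M1.neg M2
      (by rw [variance_fun_neg, w1]; exact q1) (by rw [w2]; exact q2)
    rw [covariance_fun_neg_left, variance_fun_neg, w1, w2] at l
    rw [w1, w2] at u
    change pearson C (fun p => qf ν1 p.1) (fun p => qf ν2 p.2) ∈ _
    rw [r1]
    constructor
    · rw [le_div_iff₀ psq]; linarith
    · rw [div_le_iff₀ psq]; linarith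
  · have : counterCopula = comonCopula.map (fun p : ℝ × ℝ => (p.1, 1 - p.2)) := by
      rw [comonCopula, Measure.map_map (by fun_prop) (by fun_prop)]; rfl
    change pearson counterCopula (fun p => qf ν1 p.1) (fun p => qf ν2 p.2) = -1
    rw [this, CS _ comon_copula, MV]
  · change pearson indepCopula (fun p => qf ν1 p.1) (fun p => qf ν2 p.2) = 0
    rw [P _ indep_copula, indepCopula, covariance_fst_snd_prod L1 L2, zero_div]
  · intro Cs C hCs hC hlim
    have := cov_cont ν1 ν2 L1 L2 Cs C hCs hC hlim
    change Tendsto (fun n => pearson (Cs n) (fun p => qf ν1 p.1) (fun p => qf ν2 p.2)) atTop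
      (𝓝 (pearson C (fun p => qf ν1 p.1) (fun p => qf ν2 p.2)))
    rw [P _ hC]
    simp_rw [fun n => P _ (hCs n)]
    exact this.div_const _

end

end TRC

/-- the (G1,G2)-transformed rank correlation coefficient
`κ_{G1,G2}(C) = ρ(G1⁻¹(U1), G2⁻¹(U2))` for `(U1,U2) ~ C` is a measure of concordance
in the sense of Scarsini if and only if both `G1` and `G2` are of the same type as some
non-degenerate symmetric distribution `G` with finite second moment. -/
theorem transformed_rank_corr_concordance_iff
    (ν1 ν2 : Measure ℝ) [IsProbabilityMeasure ν1] [IsProbabilityMeasure ν2] :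
    IsConcordanceMeasure (fun C => pearson C
        (fun p => quantileFn (cdfOf ν1) p.1) (fun p => quantileFn (cdfOf ν2) p.2))
      ↔ ∃ G : Measure ℝ, IsProbabilityMeasure G ∧ Nondegenerate G ∧ SymmetricDist G ∧
          FiniteSecondMoment G ∧ SameType ν1 G ∧ SameType ν2 G := by
  constructor
  · exact TRC.forward ν1 ν2
  · exact TRC.backward ν1 ν2
end
end

section
/- For p1, p2 ∈ (0,1), let Y1 ~ Bern(p1) and Y2 ~ Bern(p2). Over all joint distributions with these margins, the maximal Pearson correlation ρ(Y1,Y2) equals 1 if and only if p1 = p2 (attained by the comonotone coupling), and the minimal Pearson correlation equals −1 if and only if p1 = 1 − p2 (attained by the countermonotone coupling). Consequently, if G1 and G2 are Bernoulli distribution functions, the transformed rank correlation κ_{G1,G2} attains both bounds ±1 (at the comonotone and countermonotone copulas, respectively) if and only if p1 = p2 = 1/2. -/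
open MeasureTheory ProbabilityTheory Set

noncomputable section

/-- The Bernoulli distribution `Bern(p)` on ℝ: value 1 with probability `p`,
value 0 with probability `1 − p`. -/
def bern (p : ℝ) : Measure ℝ :=
  ENNReal.ofReal p • Measure.dirac (1:ℝ) + ENNReal.ofReal (1 - p) • Measure.dirac (0:ℝ)

/-- `μ` is a coupling (joint distribution) with first margin `ν1` and second margin `ν2`. -/
def IsCoupling (μ : Measure (ℝ × ℝ)) (ν1 ν2 : Measure ℝ) : Prop :=
  IsProbabilityMeasure μ ∧ μ.map Prod.fst = ν1 ∧ μ.map Prod.snd = ν2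

/-- The comonotone coupling `(G1⁻¹(U), G2⁻¹(U))`, `U ~ U(0,1)`, of two margins. -/
def comonCoupling (ν1 ν2 : Measure ℝ) : Measure (ℝ × ℝ) :=
  unif01.map (fun u => (quantileFn (cdfOf ν1) u, quantileFn (cdfOf ν2) u))

/-- The countermonotone coupling `(G1⁻¹(U), G2⁻¹(1−U))`, `U ~ U(0,1)`, of two margins. -/
def counterCoupling (ν1 ν2 : Measure ℝ) : Measure (ℝ × ℝ) :=
  unif01.map (fun u => (quantileFn (cdfOf ν1) u, quantileFn (cdfOf ν2) (1 - u)))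

lemma aux_cdf (p : ℝ) (hp : p ∈ Set.Ioo (0:ℝ) 1) (x : ℝ) :
    cdfOf (bern p) x = if x < 0 then 0 else if x < 1 then 1 - p else 1 := by
  obtain ⟨h0, h1⟩ := hp
  have e1 : (ENNReal.ofReal p + ENNReal.ofReal (1 - p)).toReal = 1 := by
    rw [← ENNReal.ofReal_add (by linarith) (by linarith)]; simp
  unfold cdfOf bern
  simp only [Measure.add_apply, Measure.smul_apply, smul_eq_mul,
    Measure.dirac_apply' _ measurableSet_Iic]
  by_cases hx : x < 0
  · have a : ¬ (1:ℝ) ≤ x := by linarith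
    have b : ¬ (0:ℝ) ≤ x := by linarith
    simp [hx, Set.indicator, a, b]
  · by_cases hx1 : x < 1
    · have a : ¬ (1:ℝ) ≤ x := by linarith
      have b : (0:ℝ) ≤ x := by linarith
      simp [hx, hx1, Set.indicator, a, b, h1.le]
    · have a : (1:ℝ) ≤ x := by linarith
      have b : (0:ℝ) ≤ x := by linarith
      simp [hx, hx1, Set.indicator, a, b, e1]

lemma aux_quant (p : ℝ) (hp : p ∈ Set.Ioo (0:ℝ) 1) (u : ℝ) (hu : u ∈ Set.Ioo (0:ℝ) 1) :
    quantileFn (cdfOf (bern p)) u = (Set.Ioi (1 - p)).indicator (fun _ => (1:ℝ)) u := by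
  unfold quantileFn
  obtain ⟨u0, u1⟩ := hu
  by_cases h : u ≤ 1 - p
  · have : {x : ℝ | u ≤ cdfOf (bern p) x} = Set.Ici 0 := by
      ext x
      simp only [Set.mem_ofPred_eq, Set.mem_Ici, aux_cdf p hp]
      split_ifs with a b
      · constructor <;> intro <;> linarith
      · constructor <;> intro <;> linarith
      · constructor <;> intro <;> linarith
    rw [this, csInf_Ici, Set.indicator_of_notMem]
    simpa using h
  · have : {x : ℝ | u ≤ cdfOf (bern p) x} = Set.Ici 1 := by
      ext x
      simp only [Set.mem_ofPred_eq, Set.mem_Ici, aux_cdf p hp]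
      split_ifs with a b
      · constructor <;> intro <;> linarith
      · constructor <;> intro <;> linarith
      · constructor <;> intro <;> linarith
    rw [this, csInf_Ici, Set.indicator_of_mem]
    simpa using h

lemma aux_var {Ω : Type*} [MeasurableSpace Ω] (μ : Measure Ω) [IsProbabilityMeasure μ]
    (X : Ω → ℝ) (hX : Measurable X) (h : ∀ᵐ ω ∂μ, X ω = 0 ∨ X ω = 1) :
    variance X μ = (∫ ω, X ω ∂μ) * (1 - ∫ ω, X ω ∂μ) := by
  have hL : MemLp X 2 μ := MemLp.of_bound hX.aestronglyMeasurable 1 (by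
    filter_upwards [h] with ω hω
    rcases hω with e | e <;> simp [e])
  rw [variance_eq_sub hL]
  have : ∫ ω, (X ^ 2) ω ∂μ = ∫ ω, X ω ∂μ := integral_congr_ae (by
    filter_upwards [h] with ω hω
    rcases hω with e | e <;> simp [e])
  rw [this]; ring

lemma aux_coupling (p1 p2 : ℝ) (hp1 : p1 ∈ Set.Ioo (0:ℝ) 1) (hp2 : p2 ∈ Set.Ioo (0:ℝ) 1)
    (μ : Measure (ℝ × ℝ)) (h : IsCoupling μ (bern p1) (bern p2)) :
    (∀ᵐ ω ∂μ, ω.1 = 0 ∨ ω.1 = 1) ∧ (∀ᵐ ω ∂μ, ω.2 = 0 ∨ ω.2 = 1) ∧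
    ∫ ω, ω.1 ∂μ = p1 ∧ ∫ ω, ω.2 ∂μ = p2 := by
  obtain ⟨hP, h1, h2⟩ := h
  have hm : MeasurableSet {x : ℝ | x = 0 ∨ x = 1} :=
    (measurableSet_singleton (0:ℝ)).union (measurableSet_singleton (1:ℝ))
  have hb : ∀ p : ℝ, ∀ᵐ x ∂(bern p), x = 0 ∨ x = 1 := by
    intro p
    unfold bern
    rw [ae_add_measure_iff]
    constructor
    · apply Measure.ae_smul_measure
      rw [ae_dirac_iff hm]; simp
    · apply Measure.ae_smul_measure
      rw [ae_dirac_iff hm]; simp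
  have hi : ∀ p ∈ Set.Ioo (0:ℝ) 1, ∫ x, x ∂(bern p) = p := by
    intro p hp
    unfold bern
    rw [integral_add_measure, integral_smul_measure, integral_smul_measure]
    · simp [hp.1.le]
    · exact (integrable_dirac (by simp)).smul_measure (by simp)
    · exact (integrable_dirac (by simp)).smul_measure (by simp)
  refine ⟨?_, ?_, ?_, ?_⟩
  · have := hb p1
    rw [← h1] at this
    exact ae_of_ae_map measurable_fst.aemeasurable this
  · have := hb p2
    rw [← h2] at this
    exact ae_of_ae_map measurable_snd.aemeasurable this
  · rw [← hi p1 hp1, ← h1, integral_map measurable_fst.aemeasurable]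
    exact measurable_id.aestronglyMeasurable
  · rw [← hi p2 hp2, ← h2, integral_map measurable_snd.aemeasurable]
    exact measurable_id.aestronglyMeasurable

lemma aux_bounds (p1 p2 : ℝ) (μ : Measure (ℝ × ℝ)) [IsProbabilityMeasure μ]
    (h1 : ∀ᵐ ω ∂μ, ω.1 = 0 ∨ ω.1 = 1) (h2 : ∀ᵐ ω ∂μ, ω.2 = 0 ∨ ω.2 = 1)
    (e1 : ∫ ω, ω.1 ∂μ = p1) (e2 : ∫ ω, ω.2 ∂μ = p2) :
    ∫ ω, ω.1 * ω.2 ∂μ ≤ min p1 p2 ∧ max 0 (p1 + p2 - 1) ≤ ∫ ω, ω.1 * ω.2 ∂μ := by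
  have i1 : Integrable (fun ω : ℝ × ℝ => ω.1) μ :=
    Integrable.of_bound measurable_fst.aestronglyMeasurable 1 (by
      filter_upwards [h1] with ω hω
      rcases hω with e | e <;> simp [e])
  have i2 : Integrable (fun ω : ℝ × ℝ => ω.2) μ :=
    Integrable.of_bound measurable_snd.aestronglyMeasurable 1 (by
      filter_upwards [h2] with ω hω
      rcases hω with e | e <;> simp [e])
  have i12 : Integrable (fun ω : ℝ × ℝ => ω.1 * ω.2) μ :=
    Integrable.of_bound (measurable_fst.mul measurable_snd).aestronglyMeasurable 1 (by
      filter_upwards [h1, h2] with ω hω hω'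
      rcases hω with e | e <;> rcases hω' with e' | e' <;> simp [e, e'])
  refine ⟨le_min ?_ ?_, max_le ?_ ?_⟩
  · rw [← e1]
    apply integral_mono_ae i12 i1
    filter_upwards [h1, h2] with ω hω hω'
    rcases hω with e | e <;> rcases hω' with e' | e' <;> simp [e, e']
  · rw [← e2]
    apply integral_mono_ae i12 i2
    filter_upwards [h1, h2] with ω hω hω'
    rcases hω with e | e <;> rcases hω' with e' | e' <;> simp [e, e']
  · apply integral_nonneg_of_ae
    filter_upwards [h1, h2] with ω hω hω'
    rcases hω with e | e <;> rcases hω' with e' | e' <;> simp [e, e']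
  · have : ∫ ω, (ω.1 + ω.2 - 1) ∂μ = p1 + p2 - 1 := by
      have i3 : Integrable (fun ω : ℝ × ℝ => ω.1 + ω.2) μ := i1.add i2
      rw [integral_sub i3 (integrable_const _), integral_add i1 i2, e1, e2]; simp
    rw [← this]
    apply integral_mono_ae ((i1.add i2).sub (integrable_const _)) i12
    filter_upwards [h1, h2] with ω hω hω'
    rcases hω with e | e <;> rcases hω' with e' | e' <;> simp [e, e']

lemma aux_pearson (p1 p2 : ℝ) (μ : Measure (ℝ × ℝ)) [IsProbabilityMeasure μ]
    (h1 : ∀ᵐ ω ∂μ, ω.1 = 0 ∨ ω.1 = 1) (h2 : ∀ᵐ ω ∂μ, ω.2 = 0 ∨ ω.2 = 1)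
    (e1 : ∫ ω, ω.1 ∂μ = p1) (e2 : ∫ ω, ω.2 ∂μ = p2) :
    pearson μ Prod.fst Prod.snd = ((∫ ω, ω.1 * ω.2 ∂μ) - p1 * p2) /
      Real.sqrt ((p1 * (1 - p1)) * (p2 * (1 - p2))) := by
  unfold pearson
  rw [aux_var μ _ measurable_fst h1, aux_var μ _ measurable_snd h2, e1, e2]

/-- Pearson correlation of a pair of indicators of events under the uniform law. -/
lemma aux_ind (A B : Set ℝ) (hA : MeasurableSet A) (hB : MeasurableSet B) (p1 p2 m : ℝ)
    (f : ℝ → ℝ × ℝ)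
    (hf : ∀ u ∈ Set.Ioo (0:ℝ) 1,
      f u = (A.indicator (fun _ => (1:ℝ)) u, B.indicator (fun _ => (1:ℝ)) u))
    (h1 : volume.real (A ∩ Set.Ioo 0 1) = p1) (h2 : volume.real (B ∩ Set.Ioo 0 1) = p2)
    (h12 : volume.real ((A ∩ B) ∩ Set.Ioo 0 1) = m) :
    pearson (unif01.map f) Prod.fst Prod.snd = (m - p1 * p2) /
      Real.sqrt ((p1 * (1 - p1)) * (p2 * (1 - p2))) := by
  have hP : IsProbabilityMeasure unif01 := ⟨by simp [unif01]⟩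
  set g : ℝ → ℝ × ℝ :=
    fun u => (A.indicator (fun _ => (1:ℝ)) u, B.indicator (fun _ => (1:ℝ)) u) with hg
  have hfg : f =ᵐ[unif01] g := by
    unfold unif01
    filter_upwards [ae_restrict_mem measurableSet_Ioo] with u hu
    exact hf u hu
  have mg : Measurable g :=
    (measurable_const.indicator hA).prodMk (measurable_const.indicator hB)
  rw [Measure.map_congr hfg]
  have hP' : IsProbabilityMeasure (unif01.map g) :=
    Measure.isProbabilityMeasure_map mg.aemeasurable
  have key : ∀ S : Set ℝ, MeasurableSet S → 
      ∫ u, S.indicator (fun _ => (1:ℝ)) u ∂unif01 = volume.real (S ∩ Set.Ioo 0 1) := by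
    intro S hS
    rw [integral_indicator_const _ hS]
    simp [unif01, measureReal_restrict_apply hS]
  have hm : MeasurableSet {x : ℝ | x = 0 ∨ x = 1} :=
    (measurableSet_singleton (0:ℝ)).union (measurableSet_singleton (1:ℝ))
  rw [aux_pearson p1 p2]
  · congr 2
    rw [integral_map mg.aemeasurable (by fun_prop),
      ← h12, ← key _ (hA.inter hB)]
    congr 1
    ext u
    by_cases a : u ∈ A <;> by_cases b : u ∈ B <;> simp [hg, a, b]
  · refine (ae_map_iff mg.aemeasurable (measurable_fst hm)).2 ?_
    refine Filter.Eventually.of_forall fun u => ?_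
    by_cases a : u ∈ A <;> simp [hg, a]
  · refine (ae_map_iff mg.aemeasurable (measurable_snd hm)).2 ?_
    refine Filter.Eventually.of_forall fun u => ?_
    by_cases a : u ∈ B <;> simp [hg, a]
  · rw [integral_map mg.aemeasurable measurable_fst.aestronglyMeasurable, ← h1, ← key _ hA]
  · rw [integral_map mg.aemeasurable measurable_snd.aestronglyMeasurable, ← h2, ← key _ hB]

lemma aux_vol (p : ℝ) (hp : p ∈ Set.Ioo (0:ℝ) 1) :
    volume.real (Set.Ioi (1 - p) ∩ Set.Ioo 0 1) = p := by
  have : Set.Ioi (1 - p) ∩ Set.Ioo 0 1 = Set.Ioo (1 - p) 1 := by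
    ext x; simp only [Set.mem_inter_iff, Set.mem_Ioi, Set.mem_Ioo]
    have := hp.1; have := hp.2
    constructor
    · rintro ⟨a, b, c⟩; exact ⟨a, c⟩
    · rintro ⟨a, b⟩; exact ⟨a, by linarith, b⟩
  rw [this, Real.volume_real_Ioo_of_le (by linarith [hp.1])]; ring

lemma aux_comon (p1 p2 : ℝ) (hp1 : p1 ∈ Set.Ioo (0:ℝ) 1) (hp2 : p2 ∈ Set.Ioo (0:ℝ) 1) :
    pearson (comonCoupling (bern p1) (bern p2)) Prod.fst Prod.snd = (min p1 p2 - p1 * p2) /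
      Real.sqrt ((p1 * (1 - p1)) * (p2 * (1 - p2))) := by
  unfold comonCoupling
  apply aux_ind (Set.Ioi (1 - p1)) (Set.Ioi (1 - p2)) measurableSet_Ioi measurableSet_Ioi
  · intro u hu
    rw [aux_quant p1 hp1 u hu, aux_quant p2 hp2 u hu]
  · exact aux_vol p1 hp1
  · exact aux_vol p2 hp2
  · rw [Set.Ioi_inter_Ioi]
    rcases le_total p1 p2 with h | h
    · rw [min_eq_left h, max_eq_left (by linarith)]; exact aux_vol p1 hp1
    · rw [min_eq_right h, max_eq_right (by linarith)]; exact aux_vol p2 hp2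

lemma aux_counter (p1 p2 : ℝ) (hp1 : p1 ∈ Set.Ioo (0:ℝ) 1) (hp2 : p2 ∈ Set.Ioo (0:ℝ) 1) :
    pearson (counterCoupling (bern p1) (bern p2)) Prod.fst Prod.snd =
      (max 0 (p1 + p2 - 1) - p1 * p2) /
      Real.sqrt ((p1 * (1 - p1)) * (p2 * (1 - p2))) := by
  unfold counterCoupling
  apply aux_ind (Set.Ioi (1 - p1)) (Set.Iio p2) measurableSet_Ioi measurableSet_Iio
  · intro u hu
    rw [aux_quant p1 hp1 u hu, aux_quant p2 hp2 (1 - u) ⟨by linarith [hu.2], by linarith [hu.1]⟩]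
    simp [Set.indicator]
  · exact aux_vol p1 hp1
  · have : Set.Iio p2 ∩ Set.Ioo 0 1 = Set.Ioo 0 p2 := by
      ext x; simp only [Set.mem_inter_iff, Set.mem_Iio, Set.mem_Ioo]
      have := hp2.1; have := hp2.2
      constructor
      · rintro ⟨a, b, c⟩; exact ⟨b, a⟩
      · rintro ⟨a, b⟩; exact ⟨b, a, by linarith⟩
    rw [this, Real.volume_real_Ioo_of_le hp2.1.le]; ring
  · have : (Set.Ioi (1 - p1) ∩ Set.Iio p2) ∩ Set.Ioo 0 1 = Set.Ioo (1 - p1) p2 := by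
      ext x; simp only [Set.mem_inter_iff, Set.mem_Iio, Set.mem_Ioi, Set.mem_Ioo]
      have := hp1.2; have := hp2.2
      constructor
      · rintro ⟨a, b, c⟩; exact a
      · rintro ⟨a, b⟩; exact ⟨⟨a, b⟩, by linarith, by linarith⟩
    rw [this, Real.volume_real_Ioo, max_comm]
    congr 1; ring

lemma aux_iff (a b s : ℝ) (ha : 0 < a) (hs : s = Real.sqrt (a * b)) (hb : 0 < b) :
    a = s ↔ a = b := by
  have hab : 0 < a * b := by positivity
  constructor
  · intro h
    have : a * a = a * b := by
      nth_rewrite 1 2 [h]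
      rw [hs, Real.mul_self_sqrt hab.le]
    exact mul_left_cancel₀ ha.ne' this
  · rintro rfl
    rw [hs, Real.sqrt_mul_self ha.le]

/-- for Bernoulli margins `Bern(p1)`, `Bern(p2)`, the comonotone
(countermonotone) coupling maximizes (minimizes) the Pearson correlation over all
couplings; the maximum equals 1 iff `p1 = p2`, the minimum equals −1 iff `p1 = 1 − p2`;
consequently both bounds `±1` are attained iff `p1 = p2 = 1/2`. -/
theorem bernoulli_correlation_bounds
    (p1 p2 : ℝ) (hp1 : p1 ∈ Set.Ioo (0:ℝ) 1) (hp2 : p2 ∈ Set.Ioo (0:ℝ) 1) :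
    (∀ μ : Measure (ℝ × ℝ), IsCoupling μ (bern p1) (bern p2) →
        pearson μ Prod.fst Prod.snd
          ≤ pearson (comonCoupling (bern p1) (bern p2)) Prod.fst Prod.snd) ∧
    (∀ μ : Measure (ℝ × ℝ), IsCoupling μ (bern p1) (bern p2) →
        pearson (counterCoupling (bern p1) (bern p2)) Prod.fst Prod.snd
          ≤ pearson μ Prod.fst Prod.snd) ∧
    (pearson (comonCoupling (bern p1) (bern p2)) Prod.fst Prod.snd = 1 ↔ p1 = p2) ∧
    (pearson (counterCoupling (bern p1) (bern p2)) Prod.fst Prod.snd = -1 ↔ p1 = 1 - p2) ∧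
    ((pearson (comonCoupling (bern p1) (bern p2)) Prod.fst Prod.snd = 1 ∧
        pearson (counterCoupling (bern p1) (bern p2)) Prod.fst Prod.snd = -1)
      ↔ (p1 = 1/2 ∧ p2 = 1/2)) := by
  obtain ⟨a0, a1⟩ := id hp1
  obtain ⟨b0, b1⟩ := id hp2
  have a1' : 0 < 1 - p1 := by linarith
  have b1' : 0 < 1 - p2 := by linarith
  have hs : 0 < Real.sqrt ((p1 * (1 - p1)) * (p2 * (1 - p2))) := by positivity
  have H1 : pearson (comonCoupling (bern p1) (bern p2)) Prod.fst Prod.snd = 1 ↔ p1 = p2 := by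
    rw [aux_comon p1 p2 hp1 hp2, div_eq_one_iff_eq hs.ne']
    rcases le_total p1 p2 with h | h
    · rw [min_eq_left h]
      have := aux_iff (p1 * (1 - p2)) (p2 * (1 - p1)) _ (by positivity) rfl (by positivity)
      rw [show (p1 * (1 - p1)) * (p2 * (1 - p2)) = (p1 * (1 - p2)) * (p2 * (1 - p1)) by ring,
        show p1 - p1 * p2 = p1 * (1 - p2) by ring, this]
      constructor <;> intro <;> linarith
    · rw [min_eq_right h]
      have := aux_iff (p2 * (1 - p1)) (p1 * (1 - p2)) _ (by positivity) rfl (by positivity)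
      rw [show (p1 * (1 - p1)) * (p2 * (1 - p2)) = (p2 * (1 - p1)) * (p1 * (1 - p2)) by ring,
        show p2 - p1 * p2 = p2 * (1 - p1) by ring, this]
      constructor <;> intro <;> linarith
  have H2 : pearson (counterCoupling (bern p1) (bern p2)) Prod.fst Prod.snd = -1
      ↔ p1 = 1 - p2 := by
    rw [aux_counter p1 p2 hp1 hp2, div_eq_iff hs.ne', neg_one_mul]
    rcases le_total (p1 + p2 - 1) 0 with h | h
    · rw [max_eq_left h, zero_sub, neg_inj]
      have := aux_iff (p1 * p2) ((1 - p1) * (1 - p2)) _ (by positivity) rfl (by positivity)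
      rw [show (p1 * (1 - p1)) * (p2 * (1 - p2)) = (p1 * p2) * ((1 - p1) * (1 - p2)) by ring,
        this]
      constructor <;> intro <;> linarith
    · rw [max_eq_right h]
      have := aux_iff ((1 - p1) * (1 - p2)) (p1 * p2) _ (by positivity) rfl (by positivity)
      rw [show (p1 * (1 - p1)) * (p2 * (1 - p2)) = ((1 - p1) * (1 - p2)) * (p1 * p2) by ring,
        show p1 + p2 - 1 - p1 * p2 = -((1 - p1) * (1 - p2)) by ring, neg_inj, this]
      constructor <;> intro <;> linarith
  refine ⟨?_, ?_, H1, H2, ?_⟩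
  · intro μ hμ
    have := hμ.1
    obtain ⟨c1, c2, c3, c4⟩ := aux_coupling p1 p2 hp1 hp2 μ hμ
    rw [aux_comon p1 p2 hp1 hp2, aux_pearson p1 p2 μ c1 c2 c3 c4]
    have := (aux_bounds p1 p2 μ c1 c2 c3 c4).1
    gcongr
  · intro μ hμ
    have := hμ.1
    obtain ⟨c1, c2, c3, c4⟩ := aux_coupling p1 p2 hp1 hp2 μ hμ
    rw [aux_counter p1 p2 hp1 hp2, aux_pearson p1 p2 μ c1 c2 c3 c4]
    have := (aux_bounds p1 p2 μ c1 c2 c3 c4).2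
    gcongr
  · rw [H1, H2]
    constructor
    · rintro ⟨h, h'⟩; constructor <;> linarith
    · rintro ⟨h, h'⟩; constructor <;> linarith
end
end

section
/- Let G be a concordance-inducing distribution function, let n ∈ ℕ, let C1, …, Cn be bivariate copulas, and let α1, …, αn ≥ 0 with α1 + ⋯ + αn = 1. Then the G-transformed rank correlation coefficient is affine over mixtures of copulas: κ_G(Σ_{i=1}^n αi Ci) = Σ_{i=1}^n αi κ_G(Ci). -/
open MeasureTheory ProbabilityTheory Set

noncomputable section

/-- A distribution is concordance inducing: non-degenerate, symmetric,
with finite second moment. -/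
def ConcordanceInducing (G : Measure ℝ) : Prop :=
  Nondegenerate G ∧ SymmetricDist G ∧ Integrable (fun x : ℝ => x ^ 2) G

/-- The G-transformed rank correlation coefficient of a copula:
`κ_G(C) = ρ(G⁻¹(U1), G⁻¹(U2))` for `(U1,U2) ~ C`. -/
def kappaG (G : Measure ℝ) (C : Measure (ℝ × ℝ)) : ℝ :=
  pearson C (fun p => quantileFn (cdfOf G) p.1) (fun p => quantileFn (cdfOf G) p.2)

lemma cdfOf_eq (G : Measure ℝ) [IsProbabilityMeasure G] : cdfOf G = cdf G := by
  funext x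
  rw [cdf_eq_real]; rfl

lemma quantile_le_iff (G : Measure ℝ) [IsProbabilityMeasure G] {p : ℝ} (hp : p ∈ Ioo (0:ℝ) 1)
    (x : ℝ) : quantileFn (cdfOf G) p ≤ x ↔ p ≤ cdf G x := by
  rw [cdfOf_eq]
  unfold quantileFn
  have hne : {x : ℝ | p ≤ cdf G x}.Nonempty := by
    obtain ⟨y, hy⟩ := ((tendsto_cdf_atTop G).eventually (eventually_gt_nhds hp.2)).exists
    exact ⟨y, le_of_lt hy⟩
  have hbd : BddBelow {x : ℝ | p ≤ cdf G x} := by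
    obtain ⟨y, hy⟩ := ((tendsto_cdf_atBot G).eventually (eventually_lt_nhds hp.1)).exists
    refine ⟨y, fun z hz => ?_⟩
    by_contra hlt
    push Not at hlt
    have := monotone_cdf G hlt.le
    have hz' : p ≤ cdf G z := hz
    linarith
  constructor
  · intro h
    have hc : Filter.Tendsto (cdf G) (nhdsWithin x (Ioi x)) (nhds (cdf G x)) :=
      ((cdf G).right_continuous x).mono Ioi_subset_Ici_self
    refine ge_of_tendsto hc ?_
    filter_upwards [self_mem_nhdsWithin] with y hy
    obtain ⟨z, hz, hzy⟩ := exists_lt_of_csInf_lt hne (lt_of_le_of_lt h hy)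
    exact le_trans hz (monotone_cdf G hzy.le)
  · intro h
    exact csInf_le hbd h

lemma quantile_aemeas (G : Measure ℝ) [IsProbabilityMeasure G] :
    AEMeasurable (quantileFn (cdfOf G)) unif01 := by
  refine aemeasurable_restrict_of_monotoneOn measurableSet_Ioo ?_
  intro a ha b hb hab
  rw [quantile_le_iff G ha]
  exact hab.trans ((quantile_le_iff G hb _).1 le_rfl)

lemma unif01_prob_s7 : IsProbabilityMeasure unif01 := by
  constructor
  simp [unif01]

lemma map_quantile (G : Measure ℝ) [IsProbabilityMeasure G] :
    unif01.map (quantileFn (cdfOf G)) = G := by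
  have := unif01_prob_s7
  have : IsProbabilityMeasure (unif01.map (quantileFn (cdfOf G))) :=
    Measure.isProbabilityMeasure_map (quantile_aemeas G)
  refine Measure.ext_of_Iic _ _ fun x => ?_
  rw [Measure.map_apply_of_aemeasurable (quantile_aemeas G) measurableSet_Iic]
  have h1 : unif01 (quantileFn (cdfOf G) ⁻¹' Iic x) = unif01 (Iic (cdf G x)) := by
    apply measure_congr
    have : ∀ᵐ p ∂unif01, p ∈ Ioo (0:ℝ) 1 := ae_restrict_mem measurableSet_Ioo
    filter_upwards [this] with p hp
    exact propext (quantile_le_iff G hp x)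
  rw [h1, unif01, Measure.restrict_congr_set Ioo_ae_eq_Ioc,
    Measure.restrict_apply measurableSet_Iic, ← ofReal_cdf]
  have : Iic (cdf G x) ∩ Ioc 0 1 = Ioc 0 (cdf G x) := by
    ext p
    have := cdf_le_one G x
    simp only [mem_inter_iff, mem_Iic, mem_Ioc]
    constructor
    · rintro ⟨a, b, c⟩; exact ⟨b, a⟩
    · rintro ⟨a, b⟩; exact ⟨b, a, b.trans this⟩
  rw [this]; simp

lemma quantile_memLp (G : Measure ℝ) [IsProbabilityMeasure G]
    (h : Integrable (fun x : ℝ => x ^ 2) G) : MemLp (quantileFn (cdfOf G)) 2 unif01 := by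
  have h2 : MemLp (fun x : ℝ => x) 2 G :=
    (memLp_two_iff_integrable_sq measurable_id.aestronglyMeasurable).2 h
  rw [← map_quantile G] at h2
  exact h2.comp_of_map (quantile_aemeas G)

lemma IsCopula.mix {n : ℕ} {C : Fin n → Measure (ℝ × ℝ)} (hC : ∀ i, IsCopula (C i))
    {α : Fin n → ℝ} (hα : ∀ i, 0 ≤ α i) (hsum : ∑ i, α i = 1) :
    IsCopula (∑ i, ENNReal.ofReal (α i) • C i) := by
  have hs : ∑ i, ENNReal.ofReal (α i) = 1 := by
    rw [← ENNReal.ofReal_sum_of_nonneg (fun i _ => hα i), hsum, ENNReal.ofReal_one]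
  refine ⟨⟨?_⟩, ?_, ?_⟩
  · have : ∀ i, C i univ = 1 := fun i => (hC i).prob.measure_univ
    simp [this, hs]
  · rw [← Measure.mapₗ_apply_of_measurable measurable_fst, map_sum]
    simp only [Measure.map_smul, Measure.mapₗ_apply_of_measurable measurable_fst, (hC _).fst_marginal]
    rw [← Finset.sum_smul, hs, one_smul]
  · rw [← Measure.mapₗ_apply_of_measurable measurable_snd, map_sum]
    simp only [Measure.map_smul, Measure.mapₗ_apply_of_measurable measurable_snd, (hC _).snd_marginal]
    rw [← Finset.sum_smul, hs, one_smul]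

lemma kappaG_copula (G : Measure ℝ) [IsProbabilityMeasure G] {C : Measure (ℝ × ℝ)}
    (hC : IsCopula C) :
    kappaG G C = ((∫ p, quantileFn (cdfOf G) p.1 * quantileFn (cdfOf G) p.2 ∂C)
      - (∫ u, quantileFn (cdfOf G) u ∂unif01) * (∫ u, quantileFn (cdfOf G) u ∂unif01)) /
      Real.sqrt (variance (quantileFn (cdfOf G)) unif01
        * variance (quantileFn (cdfOf G)) unif01) := by
  have hq := quantile_aemeas G
  have q1 : AEMeasurable (quantileFn (cdfOf G)) (C.map Prod.fst) := by rwa [hC.fst_marginal]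
  have q2 : AEMeasurable (quantileFn (cdfOf G)) (C.map Prod.snd) := by rwa [hC.snd_marginal]
  have v1 := variance_map q1 measurable_fst.aemeasurable
  have v2 := variance_map q2 measurable_snd.aemeasurable
  have i1 := integral_map measurable_fst.aemeasurable q1.aestronglyMeasurable
  have i2 := integral_map measurable_snd.aemeasurable q2.aestronglyMeasurable
  rw [hC.fst_marginal] at v1 i1
  rw [hC.snd_marginal] at v2 i2
  unfold kappaG pearson
  rw [← i1, ← i2]
  change _ / Real.sqrt (variance (quantileFn (cdfOf G) ∘ Prod.fst) C
    * variance (quantileFn (cdfOf G) ∘ Prod.snd) C) = _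
  rw [← v1, ← v2]

lemma copula_integrable (G : Measure ℝ) [IsProbabilityMeasure G]
    (h : Integrable (fun x : ℝ => x ^ 2) G) {C : Measure (ℝ × ℝ)} (hC : IsCopula C) :
    Integrable (fun p : ℝ × ℝ => quantileFn (cdfOf G) p.1 * quantileFn (cdfOf G) p.2) C := by
  have hm := quantile_memLp G h
  have q1 : MemLp (quantileFn (cdfOf G)) 2 (C.map Prod.fst) := by rwa [hC.fst_marginal]
  have q2 : MemLp (quantileFn (cdfOf G)) 2 (C.map Prod.snd) := by rwa [hC.snd_marginal]
  exact (q1.comp_of_map measurable_fst.aemeasurable).integrable_mul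
    (q2.comp_of_map measurable_snd.aemeasurable)

/-- linearity of `κ_G` over (finite) mixtures of copulas. -/
theorem kappaG_affine_on_mixtures
    (G : Measure ℝ) [IsProbabilityMeasure G] (hG : ConcordanceInducing G)
    (n : ℕ) (C : Fin n → Measure (ℝ × ℝ)) (hC : ∀ i, IsCopula (C i))
    (α : Fin n → ℝ) (hα : ∀ i, 0 ≤ α i) (hsum : ∑ i, α i = 1) :
    kappaG G (∑ i, ENNReal.ofReal (α i) • C i) = ∑ i, α i * kappaG G (C i) := by
  rw [kappaG_copula G (IsCopula.mix hC hα hsum)]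
  simp only [kappaG_copula G (hC _)]
  rw [integral_finsetSum_measure (fun i _ =>
    (copula_integrable G hG.2.2 (hC i)).smul_measure ENNReal.ofReal_ne_top)]
  simp only [integral_smul_measure, ENNReal.toReal_ofReal (hα _), smul_eq_mul]
  simp only [← mul_div_assoc, ← Finset.sum_div, mul_sub, Finset.sum_sub_distrib]
  rw [← Finset.sum_mul, hsum, one_mul]
end
end

section
/- For any concordance-inducing distribution function G and any dimension d, the set K_G of all d×d matrices of pairwise G-transformed rank correlation coefficients (equivalently, the set of Pearson correlation matrices of d-dimensional random vectors all of whose margins have distribution G) is a convex subset of the space of d×d real matrices. -/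
open MeasureTheory ProbabilityTheory Set

noncomputable section

/-- `corrSet ν d` is the set of `d×d` Pearson correlation matrices of random vectors
all of whose margins have distribution `ν`. -/
def corrSet (ν : Measure ℝ) (d : ℕ) : Set (Matrix (Fin d) (Fin d) ℝ) :=
  {P | ∃ μ : Measure (Fin d → ℝ), IsProbabilityMeasure μ ∧
        (∀ j, μ.map (fun x => x j) = ν) ∧
        (∀ i j, P i j = pearson μ (fun x => x i) (fun x => x j))}

/-- The set of `d×d` correlation matrices of random vectors with `Bern(1/2)` margins. -/
def PBd (d : ℕ) : Set (Matrix (Fin d) (Fin d) ℝ) := corrSet (bern (1/2)) d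

/-- The set of all `d×d` correlation matrices: symmetric positive semi-definite
matrices with entries in `[-1,1]` and unit diagonal. -/
def Pd (d : ℕ) : Set (Matrix (Fin d) (Fin d) ℝ) :=
  {P | P.IsSymm ∧ (∀ i j, P i j ∈ Set.Icc (-1:ℝ) 1) ∧ P.PosSemidef ∧ ∀ i, P i i = 1}

lemma pearson_aux (G : Measure ℝ) [IsProbabilityMeasure G] {d : ℕ}
    (μ : Measure (Fin d → ℝ)) (hm : ∀ j, μ.map (fun x => x j) = G) (i j : Fin d) :
    pearson μ (fun x => x i) (fun x => x j) =
      ((∫ x, x i * x j ∂μ) - (∫ y, y ∂G) * (∫ y, y ∂G)) /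
        Real.sqrt (variance id G * variance id G) := by
  have h1 : ∀ j, ∫ x, x j ∂μ = ∫ y, y ∂G := by
    intro j
    rw [← hm j]
    have hj : AEMeasurable (fun x : Fin d → ℝ => x j) μ := (measurable_pi_apply j).aemeasurable
    have hi : AEStronglyMeasurable (fun y : ℝ => y) (μ.map (fun x : Fin d → ℝ => x j)) :=
      measurable_id.aestronglyMeasurable
    exact (integral_map hj hi).symm
  have h2 : ∀ j, variance (fun x : Fin d → ℝ => x j) μ = variance id G := by
    intro j
    rw [← hm j, variance_map measurable_id.aemeasurable (measurable_pi_apply j).aemeasurable]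
    rfl
  simp only [pearson, h1, h2]

lemma integrable_aux (G : Measure ℝ) [IsProbabilityMeasure G]
    (hG : Integrable (fun x : ℝ => x ^ 2) G) {d : ℕ}
    (μ : Measure (Fin d → ℝ)) (hm : ∀ j, μ.map (fun x => x j) = G) (i j : Fin d) :
    Integrable (fun x : Fin d → ℝ => x i * x j) μ := by
  have h : ∀ j, MemLp (fun x : Fin d → ℝ => x j) 2 μ := by
    intro j
    rw [memLp_two_iff_integrable_sq (measurable_pi_apply j).aestronglyMeasurable]
    rw [← hm j] at hG
    exact hG.comp_measurable (measurable_pi_apply j)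
  exact (h i).integrable_mul (h j)

/-- for any concordance-inducing distribution `G` and any dimension `d`,
the set `K_G` of `d×d` matrices of pairwise G-transformed rank correlation coefficients
(the correlation matrices of random vectors with all margins `G`) is convex. -/
theorem corrSet_convex (G : Measure ℝ) [IsProbabilityMeasure G]
    (hG : ConcordanceInducing G) (d : ℕ) :
    Convex ℝ (corrSet G d) := by
  rintro P ⟨μ, hμ, hmμ, hP⟩ Q ⟨ν, hν, hmν, hQ⟩ a b ha hb hab
  have hs : ENNReal.ofReal a + ENNReal.ofReal b = 1 := by
    rw [← ENNReal.ofReal_add ha hb, hab, ENNReal.ofReal_one]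
  have hm : ∀ j, (ENNReal.ofReal a • μ + ENNReal.ofReal b • ν).map (fun x => x j) = G := by
    intro j
    rw [Measure.map_add _ _ (measurable_pi_apply j), Measure.map_smul, Measure.map_smul,
      hmμ, hmν, ← add_smul, hs, one_smul]
  refine ⟨ENNReal.ofReal a • μ + ENNReal.ofReal b • ν, ⟨by simp [hs]⟩, hm, ?_⟩
  intro i j
  have e := integral_add_measure
    ((integrable_aux G hG.2.2 μ hmμ i j).smul_measure (c := ENNReal.ofReal a) (by simp))
    ((integrable_aux G hG.2.2 ν hmν i j).smul_measure (c := ENNReal.ofReal b) (by simp))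
  rw [integral_smul_measure, integral_smul_measure, ENNReal.toReal_ofReal ha,
    ENNReal.toReal_ofReal hb] at e
  rw [pearson_aux G _ hm, e]
  simp only [Matrix.add_apply, Matrix.smul_apply, hP, hQ, pearson_aux G μ hmμ,
    pearson_aux G ν hmν, smul_eq_mul]
  obtain rfl : b = 1 - a := by linarith
  ring
end
end

section
/- For any concordance-inducing distribution function G and any dimension d, the set K_G of κ_G-compatible d×d matrices satisfies P^B_d(1/2) ⊆ K_G ⊆ P_d, where P^B_d(1/2) is the set of correlation matrices of random vectors with Bern(1/2) margins and P_d is the set of all d×d correlation matrices; moreover both bounds are attained: K_G = P^B_d(1/2) when G is the symmetric Bernoulli distribution function, and K_G = P_d when G is the standard normal distribution function. -/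
open MeasureTheory ProbabilityTheory Set

noncomputable section

lemma aux_memLp {d : ℕ} {ν : Measure ℝ} {μ : Measure (Fin d → ℝ)}
    (hm : ∀ j, μ.map (fun x => x j) = ν) (h2 : MemLp id 2 ν) (i : Fin d) :
    MemLp (fun x : Fin d → ℝ => x i) 2 μ := by
  rw [← hm i] at h2
  exact h2.comp_of_map (f := fun x : Fin d → ℝ => x i) (measurable_pi_apply _).aemeasurable

lemma aux_var_s10 {d : ℕ} {ν : Measure ℝ} {μ : Measure (Fin d → ℝ)}
    (hm : ∀ j, μ.map (fun x => x j) = ν) (i : Fin d) :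
    variance (fun x : Fin d → ℝ => x i) μ = variance id ν := by
  rw [← hm i, variance_map (Y := fun x : Fin d → ℝ => x i) (by fun_prop)
    (measurable_pi_apply i).aemeasurable]
  rfl

lemma aux_mean {d : ℕ} {ν : Measure ℝ} {μ : Measure (Fin d → ℝ)}
    (hm : ∀ j, μ.map (fun x => x j) = ν) (i : Fin d) :
    ∫ x, x i ∂μ = ∫ x, x ∂ν := by
  rw [← hm i, integral_map (measurable_pi_apply _).aemeasurable (by fun_prop)]

lemma aux_pearson_s10 {d : ℕ} {ν : Measure ℝ} {μ : Measure (Fin d → ℝ)} [IsProbabilityMeasure μ]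
    (hm : ∀ j, μ.map (fun x => x j) = ν) (h2 : MemLp id 2 ν) (i j : Fin d) :
    pearson μ (fun x => x i) (fun x => x j) =
      covariance (fun x => x i) (fun x => x j) μ / variance id ν := by
  rw [covariance_eq_sub (aux_memLp hm h2 i) (aux_memLp hm h2 j), pearson, aux_var_s10 hm, aux_var_s10 hm,
    Real.sqrt_mul_self (variance_nonneg _ _)]
  rfl

lemma aux_upper {d : ℕ} {ν : Measure ℝ} (h2 : MemLp id 2 ν) (hv : 0 < variance id ν) :
    corrSet ν d ⊆ Pd d := by
  rintro P ⟨μ, hμ, hm, hP⟩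
  have hP' : ∀ i j, P i j =
      covariance (fun x : Fin d → ℝ => x i) (fun x => x j) μ / variance id ν :=
    fun i j => (hP i j).trans (aux_pearson_s10 hm h2 i j)
  have hL := aux_memLp hm h2
  have hsymm : P.IsSymm := by
    ext i j
    rw [Matrix.transpose_apply, hP', hP', covariance_comm]
  refine ⟨hsymm, fun i j => ?_, ?_, fun i => ?_⟩
  · have h1 := variance_fun_add (hL i) (hL j)
    have h3 := variance_fun_sub (hL i) (hL j)
    rw [aux_var_s10 hm, aux_var_s10 hm] at h1 h3
    have h4 := variance_nonneg (fun x : Fin d → ℝ => x i + x j) μ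
    have h5 := variance_nonneg (fun x : Fin d → ℝ => x i - x j) μ
    rw [hP' i j, Set.mem_Icc, le_div_iff₀ hv, div_le_iff₀ hv]
    constructor <;> linarith
  · refine Matrix.PosSemidef.of_dotProduct_mulVec_nonneg 
      (by rw [Matrix.IsHermitian, Matrix.conjTranspose_eq_transpose_of_trivial]; exact hsymm) ?_
    intro c
    have h : star c ⬝ᵥ P.mulVec c =
        variance (fun x : Fin d → ℝ => ∑ i, c i * x i) μ / variance id ν := by
      rw [← covariance_self (Measurable.aemeasurable (by fun_prop)), covariance_fun_sum_fun_sum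
        (fun i => (hL i).const_mul (c i)) (fun i => (hL i).const_mul (c i))]
      simp only [covariance_const_mul_left, covariance_const_mul_right, dotProduct, Matrix.mulVec,
        hP', Finset.sum_div, Finset.mul_sum, star_trivial]
      refine Finset.sum_congr rfl fun i _ => Finset.sum_congr rfl fun j _ => ?_
      ring
    rw [h]
    exact div_nonneg (variance_nonneg _ _) hv.le
  · rw [hP', covariance_self (measurable_pi_apply _).aemeasurable, aux_var_s10 hm, div_self hv.ne']

lemma aux_CI {G : Measure ℝ} [IsProbabilityMeasure G] (h : ConcordanceInducing G) :
    MemLp id 2 G ∧ 0 < variance id G := by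
  have h2 : MemLp id 2 G := (memLp_two_iff_integrable_sq (by fun_prop)).2 h.2.2
  refine ⟨h2, (variance_nonneg _ _).lt_of_ne' fun h0 => ?_⟩
  have := ae_eq_integral_of_variance_eq_zero h2 h0
  refine h.1 (∫ x, id x ∂G) ?_
  have h3 := Measure.map_congr (μ := G) (f := id) (g := fun _ => ∫ x, id x ∂G)
    (mβ := inferInstance) this
  simpa [Measure.map_id] using h3

lemma aux_bern : bern (1/2) = (2⁻¹ : ENNReal) • Measure.dirac (1:ℝ)
    + (2⁻¹ : ENNReal) • Measure.dirac (0:ℝ) := by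
  have : ENNReal.ofReal 2⁻¹ = 2⁻¹ := by
    rw [ENNReal.ofReal_inv_of_pos two_pos]; simp
  have h' : (1 : ℝ) - 2⁻¹ = 2⁻¹ := by norm_num
  simp [bern, this, h']

lemma aux_bern_int (f : ℝ → ℝ) : ∫ x, f x ∂(bern (1/2)) = (f 1 + f 0) / 2 := by
  rw [aux_bern, integral_add_measure, integral_smul_measure, integral_smul_measure,
    integral_dirac, integral_dirac]
  · simp; ring
  · exact (integrable_dirac (by simp)).smul_measure (by simp)
  · exact (integrable_dirac (by simp)).smul_measure (by simp)

lemma aux_bern_memLp : MemLp id 2 (bern (1/2)) := by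
  have : IsFiniteMeasure (bern (1/2)) := by rw [aux_bern]; exact ⟨by simp⟩
  rw [memLp_two_iff_integrable_sq (by fun_prop), aux_bern]
  refine Integrable.add_measure ?_ ?_
  · exact (integrable_dirac (by simp)).smul_measure (by simp)
  · exact (integrable_dirac (by simp)).smul_measure (by simp)

lemma aux_bern_var : variance id (bern (1/2)) = 1 / 4 := by
  rw [variance_eq_integral (by fun_prop), aux_bern_int (fun x => id x), aux_bern_int]
  norm_num

lemma aux_lower {d : ℕ} {G : Measure ℝ} [IsProbabilityMeasure G] (h : ConcordanceInducing G) :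
    PBd d ⊆ corrSet G d := by
  obtain ⟨h2, hv⟩ := aux_CI h
  obtain ⟨m, hG⟩ := h.2.1
  have hmean : ∫ x, x ∂G = m := by
    have h1 : Integrable (fun x : ℝ => x) G := h2.integrable one_le_two
    have h3 : ∫ x, x ∂(G.map (fun x => 2 * m - x)) = ∫ x, (2 * m - x) ∂G :=
      integral_map (by fun_prop) (by fun_prop)
    rw [hG, integral_sub (integrable_const _) h1] at h3
    simp at h3
    linarith
  rintro P ⟨μ, hμ, hm, hP⟩
  set T : (Fin d → ℝ) × ℝ → (Fin d → ℝ) := fun p i => m + (2 * p.1 i - 1) * (p.2 - m) with hT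
  have hTm : Measurable T := by
    rw [measurable_pi_iff]; intro i; simp only [hT]; fun_prop
  have hprob : IsProbabilityMeasure ((μ.prod G).map T) :=
    Measure.isProbabilityMeasure_map hTm.aemeasurable
  have hmarg : ∀ j, ((μ.prod G).map T).map (fun x => x j) = G := by
    intro j
    rw [Measure.map_map (by fun_prop) hTm]
    have e : (fun x : Fin d → ℝ => x j) ∘ T =
        (fun q : ℝ × ℝ => m + (2 * q.1 - 1) * (q.2 - m)) ∘
          Prod.map (fun x : Fin d → ℝ => x j) id := rfl
    have hSF : SFinite (Measure.map (fun x : Fin d → ℝ => x j) μ) := inferInstance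
    rw [e, ← Measure.map_map (by fun_prop) (by fun_prop),
      ← Measure.map_prod_map _ _ (by fun_prop) (by fun_prop), hm j, Measure.map_id, aux_bern]
    rw [Measure.add_prod, Measure.prod_smul_left, Measure.prod_smul_left,
      Measure.dirac_prod, Measure.dirac_prod, Measure.map_add _ _ (by fun_prop), Measure.map_smul,
      Measure.map_smul, Measure.map_map (by fun_prop) (by fun_prop),
      Measure.map_map (by fun_prop) (by fun_prop)]
    have e1 : ((fun q : ℝ × ℝ => m + (2 * q.1 - 1) * (q.2 - m)) ∘ Prod.mk 1) = id := by
      ext x; simp; ring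
    have e0 : ((fun q : ℝ × ℝ => m + (2 * q.1 - 1) * (q.2 - m)) ∘ Prod.mk 0)
        = fun x => 2 * m - x := by
      ext x; simp; ring
    rw [e1, e0, hG, Measure.map_id, ← add_smul, ENNReal.inv_two_add_inv_two, one_smul]
  refine ⟨_, hprob, hmarg, fun i j => ?_⟩
  rw [hP, aux_pearson_s10 hm aux_bern_memLp, aux_pearson_s10 hmarg h2, aux_bern_var, eq_div_iff hv.ne']
  rw [covariance, covariance, aux_mean hm, aux_mean hm, aux_mean hmarg, aux_mean hmarg, hmean,
    aux_bern_int (fun x => x), integral_map hTm.aemeasurable (by fun_prop),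
    variance_eq_integral (by fun_prop)]
  simp only [id, hmean, hT]
  have e : ∀ p : (Fin d → ℝ) × ℝ, (m + (2 * p.1 i - 1) * (p.2 - m) - m) *
      (m + (2 * p.1 j - 1) * (p.2 - m) - m) =
      (4 * ((p.1 i - (1 + 0) / 2) * (p.1 j - (1 + 0) / 2))) * (p.2 - m) ^ 2 := by
    intro p; ring
  simp_rw [e]
  rw [integral_prod_mul (fun x : Fin d → ℝ => 4 * ((x i - (1 + 0) / 2) * (x j - (1 + 0) / 2)))
    (fun y : ℝ => (y - m) ^ 2), integral_const_mul]
  ring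

lemma aux_gauss {d : ℕ} : Pd d ⊆ corrSet (gaussianReal 0 1) d := by
  rintro P ⟨-, -, hpsd, hdiag⟩
  have hmeas : Measurable (WithLp.ofLp : EuclideanSpace ℝ (Fin d) → (Fin d → ℝ)) := by fun_prop
  have hprob : IsProbabilityMeasure ((multivariateGaussian (0 : EuclideanSpace ℝ (Fin d)) P).map
      WithLp.ofLp) := Measure.isProbabilityMeasure_map hmeas.aemeasurable
  have hm : ∀ j, ((multivariateGaussian (0 : EuclideanSpace ℝ (Fin d)) P).map
      WithLp.ofLp).map (fun x => x j) = gaussianReal 0 1 := by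
    intro j
    rw [Measure.map_map (by fun_prop) hmeas]
    have := (measurePreserving_eval_multivariateGaussian (μ := 0) hpsd (i := j)).map_eq
    rw [hdiag] at this
    simpa [Function.comp_def] using this
  refine ⟨_, hprob, hm, fun i j => ?_⟩
  rw [aux_pearson_s10 hm (memLp_id_gaussianReal 2), variance_id_gaussianReal,
    covariance_map (measurable_pi_apply _).aestronglyMeasurable
      (measurable_pi_apply _).aestronglyMeasurable hmeas.aemeasurable]
  have := covariance_eval_multivariateGaussian (μ := 0) hpsd i j
  simpa [Function.comp_def] using this.symm

/-- for any concordance-inducing `G`, `P^B_d(1/2) ⊆ K_G ⊆ P_d`;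
both bounds are attained: `K_G = P^B_d(1/2)` for the symmetric Bernoulli distribution
and `K_G = P_d` for the standard normal distribution. -/
theorem upper_and_lower_bounds_of_KG (d : ℕ) :
    (∀ G : Measure ℝ, IsProbabilityMeasure G → ConcordanceInducing G →
        PBd d ⊆ corrSet G d ∧ corrSet G d ⊆ Pd d) ∧
      corrSet (bern (1/2)) d = PBd d ∧
      corrSet (gaussianReal 0 1) d = Pd d := by
  refine ⟨fun G hG hc => ⟨aux_lower hc, ?_⟩, rfl, subset_antisymm ?_ aux_gauss⟩
  · obtain ⟨h2, hv⟩ := aux_CI hc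
    exact aux_upper h2 hv
  · refine aux_upper (memLp_id_gaussianReal 2) ?_
    rw [variance_id_gaussianReal]
    norm_num
end
end
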